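/- arXiv:1812.09913 — 6 statements merged into one kernel-verified Lean document; each statement's English description precedes it below -/
import Mathlib

section
/- There exists an absolute constant C > 0 such that for all reals k ≥ 2 and ℓ ≥ 2, every integer n ≥ 1, and all disjoint finite sets A and B with |A| = |B| = n, there exists a bipartite graph H with vertex set A ∪ B and all edges between A and B, having at most C · n · (k · log ℓ + ℓ · log k) edges, such that for every subset B' ⊆ B with |B'| ≥ n/ℓ, the neighbourhood of B' in H satisfies |N_H(B')| ≥ (1 − 1/k) · n. -/
theorem choose_bound (n r : ℕ) (k : ℝ) (hk : 2 ≤ k) (h : (n : ℝ) ≤ r * k) :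
    (n.choose r : ℝ) ≤ Real.exp (r * (3 * Real.log k)) := by
  have h1 : (n.choose r : ℝ) ≤ (n : ℝ) ^ r / (r.factorial : ℝ) := Nat.choose_le_pow_div r n
  have h2 : (r : ℝ) ^ r / (r.factorial : ℝ) ≤ Real.exp r :=
    Real.pow_div_factorial_le_exp (r : ℝ) (Nat.cast_nonneg r) r
  have hk0 : 0 < k := by linarith
  have hl : Real.log 2 ≤ Real.log k := Real.log_le_log (by norm_num) hk
  have hl2 := Real.log_two_gt_d9
  calc (n.choose r : ℝ) ≤ (n : ℝ) ^ r / (r.factorial : ℝ) := h1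
    _ ≤ (r * k) ^ r / (r.factorial : ℝ) := by gcongr
    _ = k ^ r * ((r : ℝ) ^ r / (r.factorial : ℝ)) := by rw [mul_pow]; ring
    _ ≤ k ^ r * Real.exp r := by gcongr
    _ = Real.exp (r * (Real.log k + 1)) := by
        rw [mul_add, mul_one, Real.exp_add, Real.exp_nat_mul, Real.exp_log hk0]
    _ ≤ _ := by
        apply Real.exp_le_exp.2
        apply mul_le_mul_of_nonneg_left _ (Nat.cast_nonneg r)
        linarith

theorem count_bound (n a b m : ℕ) (k l : ℝ) (hn : 1 ≤ n) (hk : 2 ≤ k) (hl : 2 ≤ l)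
    (ha : (n : ℝ) ≤ a * k) (hb : (n : ℝ) ≤ b * l) (han : a ≤ n) (hbn : b ≤ n)
    (hm : 3 * n * (k * Real.log l + l * Real.log k) < m) :
    n.choose a * n.choose b * (n * n - a * b) ^ m < (n * n) ^ m := by
  have hab : a * b ≤ n * n := Nat.mul_le_mul han hbn
  have hn0 : (0 : ℝ) < n := by exact_mod_cast hn
  have hlk : 0 < Real.log k := Real.log_pos (by linarith)
  have hll : 0 < Real.log l := Real.log_pos (by linarith)
  have ha0 : (0 : ℝ) < a := by
    by_contra hc
    have : (a : ℝ) * k ≤ 0 := mul_nonpos_of_nonpos_of_nonneg (by linarith) (by linarith)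
    linarith
  have hb0 : (0 : ℝ) < b := by
    by_contra hc
    have : (b : ℝ) * l ≤ 0 := mul_nonpos_of_nonpos_of_nonneg (by linarith) (by linarith)
    linarith
  set t : ℝ := (a * b : ℝ) / (n * n) with ht
  have ht0 : 0 < t := by positivity
  have ht1 : t ≤ 1 := by
    rw [ht, div_le_one (by positivity)]
    exact_mod_cast hab
  have hpow : ((n * n - a * b : ℕ) : ℝ) ^ m ≤ ((n * n : ℕ) : ℝ) ^ m * Real.exp (-(m * t)) := by
    have e1 : ((n * n - a * b : ℕ) : ℝ) = ((n * n : ℕ) : ℝ) * (1 - t) := by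
      rw [Nat.cast_sub hab, ht]; push_cast; field_simp
    rw [e1, mul_pow]
    have e2 : (1 - t) ^ m ≤ Real.exp (-t) ^ m :=
      pow_le_pow_left₀ (by linarith) (by have := Real.add_one_le_exp (-t); linarith) m
    have e3 : Real.exp (-t) ^ m = Real.exp (-(m * t)) := by
      rw [← Real.exp_nat_mul]; congr 1; ring
    rw [e3] at e2
    gcongr
  have hmain : a * (3 * Real.log k) + b * (3 * Real.log l) < m * t := by
    have e1 : 3 * n * (k * Real.log l + l * Real.log k) * t < m * t :=
      mul_lt_mul_of_pos_right hm ht0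
    have e2 : 3 * n * (k * Real.log l + l * Real.log k) * t
        = 3 * (b * Real.log l * (a * k / n) + a * Real.log k * (b * l / n)) := by
      rw [ht]; field_simp
    have e3 : 1 ≤ a * k / n := (one_le_div hn0).2 ha
    have e4 : 1 ≤ b * l / n := (one_le_div hn0).2 hb
    have e5 := mul_le_mul_of_nonneg_left e3 (by positivity : 0 ≤ b * Real.log l)
    have e6 := mul_le_mul_of_nonneg_left e4 (by positivity : 0 ≤ a * Real.log k)
    linarith
  have hR : (n.choose a : ℝ) * n.choose b * ((n * n - a * b : ℕ) : ℝ) ^ m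
      < ((n * n : ℕ) : ℝ) ^ m := by
    have c1 := choose_bound n a k hk ha
    have c2 := choose_bound n b l hl hb
    have hp : 0 < ((n * n : ℕ) : ℝ) ^ m := by push_cast; positivity
    calc (n.choose a : ℝ) * n.choose b * ((n * n - a * b : ℕ) : ℝ) ^ m
        ≤ Real.exp (a * (3 * Real.log k)) * Real.exp (b * (3 * Real.log l)) *
          (((n * n : ℕ) : ℝ) ^ m * Real.exp (-(m * t))) := by gcongr
      _ = ((n * n : ℕ) : ℝ) ^ m *
          Real.exp (a * (3 * Real.log k) + b * (3 * Real.log l) + -(m * t)) := by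
          rw [Real.exp_add, Real.exp_add]; ring
      _ < ((n * n : ℕ) : ℝ) ^ m * 1 := by
          apply mul_lt_mul_of_pos_left _ hp
          rw [Real.exp_lt_one_iff]
          linarith
      _ = _ := mul_one _
  exact_mod_cast hR

theorem exists_fun {α : Type} [DecidableEq α] (A B : Finset α) (n a b m : ℕ)
    (hA : A.card = n) (hB : B.card = n)
    (h : n.choose a * n.choose b * (n * n - a * b) ^ m < (n * n) ^ m) :
    ∃ f : Fin m → α × α, (∀ i, (f i).1 ∈ A ∧ (f i).2 ∈ B) ∧
      ∀ S ⊆ A, S.card = a → ∀ T ⊆ B, T.card = b → ∃ i, (f i).1 ∈ S ∧ (f i).2 ∈ T := by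
  classical
  let Om : Finset (Fin m → α × α) := Fintype.piFinset (fun _ => A ×ˢ B)
  let P := A.powersetCard a ×ˢ B.powersetCard b
  let bad : Finset α × Finset α → Finset (Fin m → α × α) :=
    fun p => Fintype.piFinset (fun _ => (A ×ˢ B) \ (p.1 ×ˢ p.2))
  have hcard : (P.biUnion bad).card < Om.card := by
    have h1 : (P.biUnion bad).card ≤ P.card * (n * n - a * b) ^ m := by
      apply Finset.card_biUnion_le_card_mul
      intro p hp
      simp only [P, Finset.mem_product, Finset.mem_powersetCard] at hp
      obtain ⟨⟨h1, h2⟩, h3, h4⟩ := hp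
      have : (bad p).card = (n * n - a * b) ^ m := by
        simp only [bad, Fintype.card_piFinset, Finset.prod_const, Finset.card_univ,
          Fintype.card_fin]
        rw [Finset.card_sdiff_of_subset (Finset.product_subset_product h1 h3)]
        simp [hA, hB, h2, h4]
      exact this.le
    have h2 : P.card = n.choose a * n.choose b := by simp [P, hA, hB]
    have h3 : Om.card = (n * n) ^ m := by simp [Om, Fintype.card_piFinset, hA, hB]
    rw [h3]; rw [h2] at h1; omega
  obtain ⟨f, hf, hfb⟩ := Finset.exists_mem_notMem_of_card_lt_card hcard
  have hf' : ∀ i, (f i).1 ∈ A ∧ (f i).2 ∈ B := by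
    intro i
    have := Fintype.mem_piFinset.1 hf i
    exact Finset.mem_product.1 this
  refine ⟨f, hf', ?_⟩
  intro S hS hSa T hT hTb
  by_contra! hc
  apply hfb
  rw [Finset.mem_biUnion]
  refine ⟨(S, T), ?_, ?_⟩
  · simp [P, Finset.mem_powersetCard, hS, hSa, hT, hTb]
  · refine Fintype.mem_piFinset.2 (fun i => ?_)
    rw [Finset.mem_sdiff, Finset.mem_product, Finset.mem_product]
    exact ⟨hf' i, fun hh => hc i hh.1 hh.2⟩


/-- There is an absolute constant `C > 0` such that for all `k, ℓ ≥ 2` and every `n ≥ 1`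
and disjoint finite sets `A`, `B` of size `n` each, there is a bipartite graph `H`
between `A` and `B` with at most `C·n·(k·log ℓ + ℓ·log k)` edges such that every
`B' ⊆ B` of size at least `n/ℓ` has neighbourhood of size at least `(1 - 1/k)·n`. -/
theorem expander_exists :
    ∃ C : ℝ, 0 < C ∧
      ∀ k ℓ : ℝ, 2 ≤ k → 2 ≤ ℓ → ∀ n : ℕ, 1 ≤ n →
      ∀ (α : Type) (A B : Finset α), Disjoint A B → A.card = n → B.card = n →
      ∃ H : SimpleGraph α,
        (∀ x y, H.Adj x y → (x ∈ A ∧ y ∈ B) ∨ (x ∈ B ∧ y ∈ A)) ∧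
        (H.edgeSet.ncard : ℝ) ≤ C * n * (k * Real.log ℓ + ℓ * Real.log k) ∧
        ∀ B' : Finset α, B' ⊆ B → (n : ℝ) / ℓ ≤ B'.card →
          (1 - 1 / k) * n ≤ ({y | ∃ x ∈ B', H.Adj x y}.ncard : ℝ) := by
  classical
  refine ⟨4, by norm_num, ?_⟩
  intro k l hk hl n hn α A B hAB hA hB
  have hn0 : (0 : ℝ) < n := by exact_mod_cast hn
  have hn1 : (1 : ℝ) ≤ n := by exact_mod_cast hn
  have hk0 : 0 < k := by linarith
  have hl0 : 0 < l := by linarith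
  set X := k * Real.log l + l * Real.log k with hX
  have hX1 : 1 ≤ X := by
    have h2 := Real.log_two_gt_d9
    have h3 : Real.log 2 ≤ Real.log k := Real.log_le_log (by norm_num) hk
    have h4 : Real.log 2 ≤ Real.log l := Real.log_le_log (by norm_num) hl
    nlinarith
  have hnX : 1 ≤ n * X := by nlinarith
  set a := ⌊(n : ℝ) / k⌋₊ + 1 with ha
  set b := ⌈(n : ℝ) / l⌉₊ with hb
  set m := ⌊3 * n * X⌋₊ + 1 with hm
  have ham : (n : ℝ) ≤ a * k := by
    have := (Nat.lt_floor_add_one ((n : ℝ) / k)).le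
    rw [div_le_iff₀ hk0] at this
    rw [ha]; push_cast; exact this
  have hbm : (n : ℝ) ≤ b * l := by
    have := Nat.le_ceil ((n : ℝ) / l)
    rwa [div_le_iff₀ hl0] at this
  have han : a ≤ n := by
    have : ⌊(n : ℝ) / k⌋₊ < n := by
      rw [Nat.floor_lt (by positivity), div_lt_iff₀ hk0]
      nlinarith
    omega
  have hbn : b ≤ n := by
    rw [hb, Nat.ceil_le, div_le_iff₀ hl0]
    nlinarith
  have hmm : 3 * n * X < m := by
    rw [hm]; push_cast; exact Nat.lt_floor_add_one _
  have hm4 : (m : ℝ) ≤ 4 * n * X := by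
    have := Nat.floor_le (show 0 ≤ 3 * n * X by nlinarith)
    rw [hm]; push_cast; nlinarith
  obtain ⟨f, hf, hfST⟩ := exists_fun A B n a b m hA hB
    (count_bound n a b m k l hn hk hl ham hbm han hbn hmm)
  let H : SimpleGraph α :=
    { Adj := fun x y => ∃ i, f i = (x, y) ∨ f i = (y, x)
      symm := ⟨fun x y ⟨i, hi⟩ => ⟨i, hi.symm⟩⟩
      loopless := ⟨fun x ⟨i, hi⟩ => by
        have hi' : f i = (x, x) := by tauto
        have := hf i
        rw [hi'] at this
        exact Finset.disjoint_left.1 hAB this.1 this.2⟩ }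
  have hH : ∀ x y, H.Adj x y ↔ ∃ i, f i = (x, y) ∨ f i = (y, x) := fun _ _ => Iff.rfl
  have hbip : ∀ x y, H.Adj x y → (x ∈ A ∧ y ∈ B) ∨ (x ∈ B ∧ y ∈ A) := by
    intro x y hxy
    obtain ⟨i, hi | hi⟩ := (hH x y).1 hxy
    · left; have := hf i; rw [hi] at this; exact this
    · right; have := hf i; rw [hi] at this; exact this.symm
  refine ⟨H, hbip, ?_, ?_⟩
  · have hsub : H.edgeSet ⊆ Set.range (fun i => s((f i).1, (f i).2)) := by
      intro e
      induction e using Sym2.ind with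
      | _ x y =>
        intro he
        rw [SimpleGraph.mem_edgeSet] at he
        obtain ⟨i, hi | hi⟩ := (hH x y).1 he
        · exact ⟨i, by simp [hi]⟩
        · exact ⟨i, by simp [hi, Sym2.eq_swap]⟩
    have h1 : H.edgeSet.ncard ≤ m := by
      refine (Set.ncard_le_ncard hsub (Set.finite_range _)).trans ?_
      rw [← Set.image_univ]
      refine (Set.ncard_image_le Set.finite_univ).trans ?_
      simp [Set.ncard_univ]
    exact le_trans (by exact_mod_cast h1) hm4
  · intro B' hB' hcard
    by_contra! hc
    set N : Set α := {y | ∃ x ∈ B', H.Adj x y} with hN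
    have hNA : N ⊆ (A : Set α) := by
      rintro y ⟨x, hx, hxy⟩
      rcases hbip x y hxy with h | h
      · exact absurd (hB' hx) (Finset.disjoint_left.1 hAB h.1)
      · exact h.2
    set F := A.filter (fun y => y ∈ N) with hF
    have hFN : N.ncard = F.card := by
      rw [← Set.ncard_coe_finset]
      congr 1
      ext y
      simp only [hF, Finset.coe_filter, Set.mem_setOf_eq]
      exact ⟨fun h => ⟨hNA h, h⟩, fun h => h.2⟩
    have hsum : (A \ F).card + F.card = n := by
      rw [Finset.card_sdiff_add_card_eq_card (Finset.filter_subset _ _), hA]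
    have hsum' : ((A \ F).card : ℝ) + F.card = n := by exact_mod_cast hsum
    rw [hFN] at hc
    have hgt : (n : ℝ) / k < (A \ F).card := by
      have : (1 - 1 / k) * n = n - n / k := by ring
      linarith
    have hage : a ≤ (A \ F).card := by
      have := (Nat.floor_lt (by positivity)).2 hgt
      omega
    have hbge : b ≤ B'.card := Nat.ceil_le.2 hcard
    obtain ⟨S, hS, hSa⟩ := Finset.exists_subset_card_eq hage
    obtain ⟨T, hT, hTb⟩ := Finset.exists_subset_card_eq hbge
    obtain ⟨i, hi1, hi2⟩ := hfST S (hS.trans Finset.sdiff_subset) hSa T (hT.trans hB') hTb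
    have hi3 := Finset.mem_sdiff.1 (hS hi1)
    exact hi3.2 (Finset.mem_filter.2 ⟨hi3.1, (f i).2, hT hi2, (hH _ _).2 ⟨i, Or.inr rfl⟩⟩)
end

section
/- There exists an absolute constant C > 0 such that for all reals k ≥ 2 and τ ≥ 1 and all disjoint finite sets A and B with |A| ≥ |B| ≥ 2, there exists a bipartite graph H with vertex set A ∪ B and all edges between A and B, in which every vertex of B has at least one neighbour, having at most C · |B| · (k · log τ + τ · log k + log |B|) edges, such that for every subset A' ⊆ A with |A'| ≤ (1 − 1/k) · |A|, the number of vertices b ∈ B all of whose neighbours lie in A' is at most |A'| / τ. -/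
open Finset in
lemma sse_markov {β γ : Type} [Fintype β] [Fintype γ] [DecidableEq β] [DecidableEq γ] (d : ℕ)
    (A' : Finset γ) (θ s : ℝ) (hθ : 0 ≤ θ) :
    ((univ.filter (fun g : β → Fin d → γ =>
      s ≤ ((univ.filter (fun b => ∀ i, g b i ∈ A')).card : ℝ))).card : ℝ) * Real.exp (θ * s) ≤
      ((Fintype.card γ : ℝ) ^ d + (Real.exp θ - 1) * (A'.card : ℝ) ^ d) ^ Fintype.card β := by
  classical
  have h1 : ∀ h : Fin d → γ, (if (∀ i, h i ∈ A') then Real.exp θ else 1) =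
      1 + (Real.exp θ - 1) * (if (∀ i, h i ∈ A') then 1 else 0) := by
    intro h; split_ifs <;> ring
  have h2 : ∑ h : Fin d → γ, (if (∀ i, h i ∈ A') then Real.exp θ else 1) =
      (Fintype.card γ : ℝ) ^ d + (Real.exp θ - 1) * (A'.card : ℝ) ^ d := by
    simp_rw [h1]
    rw [sum_add_distrib, ← mul_sum]
    congr 1
    · simp
    · congr 1
      rw [sum_boole]
      have : (univ.filter (fun h : Fin d → γ => ∀ i, h i ∈ A')) =
          Fintype.piFinset (fun _ => A') := by ext; simp
      rw [this]; simp
  have h3 : ((Fintype.card γ : ℝ) ^ d + (Real.exp θ - 1) * (A'.card : ℝ) ^ d) ^ Fintype.card β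
      = ∑ g : β → Fin d → γ, ∏ b, (if (∀ i, g b i ∈ A') then Real.exp θ else 1) := by
    have h := prod_univ_sum (fun _ : β => (univ : Finset (Fin d → γ)))
      (fun _ h => if (∀ i, h i ∈ A') then Real.exp θ else 1)
    rw [Fintype.piFinset_univ] at h
    rw [← h, ← h2]
    simp
  rw [h3, ← nsmul_eq_mul, ← sum_const]
  refine le_trans (sum_le_sum (g := fun g => ∏ b, (if (∀ i, g b i ∈ A') then Real.exp θ else 1)) ?_)
    (sum_le_sum_of_subset_of_nonneg (subset_univ _) ?_)
  · intro g hg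
    rw [mem_filter] at hg
    rw [prod_ite]
    simp only [prod_const, one_pow, mul_one]
    rw [← Real.exp_nat_mul, mul_comm θ]
    exact Real.exp_le_exp.2 (mul_le_mul_of_nonneg_right hg.2 hθ)
  · intro g _ _
    exact prod_nonneg fun b _ => by split_ifs <;> positivity

lemma sse_choose (N a : ℕ) (ha : 1 ≤ a) (haN : a ≤ N) :
    (N.choose a : ℝ) ≤ Real.exp (a * (1 + Real.log (N / a))) := by
  have ha0 : (0:ℝ) < a := by exact_mod_cast ha
  have hN0 : (0:ℝ) < N := by exact_mod_cast (by omega : 0 < N)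
  have h1 := Nat.choose_le_pow_div (α := ℝ) a N
  have h2 := Real.pow_div_factorial_le_exp (a:ℝ) ha0.le a
  have hf : (0:ℝ) < a.factorial := by exact_mod_cast a.factorial_pos
  rw [mul_add, Real.exp_add, mul_one, Real.exp_nat_mul, Real.exp_log (by positivity)]
  calc (N.choose a : ℝ) ≤ N ^ a / a.factorial := h1
    _ = (a ^ a / a.factorial) * (N / a) ^ a := by
      rw [div_pow]; field_simp
    _ ≤ _ := by gcongr

/-- small sets -/
lemma sse_small (k τ : ℝ) (hk : 2 ≤ k) (hτ : 1 ≤ τ) (n d a N : ℕ) (hn : 2 ≤ n)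
    (hd : 400 * (k * Real.log τ + τ * Real.log k + Real.log n) ≤ d) (ha : 1 ≤ a)
    (haN : 2 * a ≤ N) (P s : ℝ) (hs1 : 1 ≤ s) (hs : a ≤ s * τ)
    (hP : ∀ θ : ℝ, 0 ≤ θ → P ≤ Real.exp (-(θ * s)) *
      (1 + (Real.exp θ - 1) * Real.exp (-(d * Real.log (N / a)))) ^ n) :
    P * N.choose a ≤ (1/4) ^ a := by
  have ha1 : (1:ℝ) ≤ a := by exact_mod_cast ha
  have haN' : 2 * (a:ℝ) ≤ N := by exact_mod_cast haN
  have hn' : (2:ℝ) ≤ n := by exact_mod_cast hn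
  have hl2 := Real.log_two_gt_d9
  have hl2' := Real.log_two_lt_d9
  have hlk : Real.log 2 ≤ Real.log k := Real.log_le_log (by norm_num) hk
  have hln : Real.log 2 ≤ Real.log n := Real.log_le_log (by norm_num) hn'
  have hlt : 0 ≤ Real.log τ := Real.log_nonneg hτ
  set L := Real.log (N / a) with hL
  have hLL : Real.log 2 ≤ L := Real.log_le_log (by norm_num) (by rw [le_div_iff₀ (by linarith)]; linarith)
  have hL0 : 0 < L := by linarith
  have hd' : 400 * (τ * Real.log 2 + Real.log n) ≤ d := by nlinarith [mul_nonneg (by linarith : 0 ≤ k) hlt]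
  have hdL : 400 * (τ * Real.log 2 + Real.log n) * L ≤ d * L := by gcongr
  have hnL : Real.log n ≤ 400 * Real.log n * L := by nlinarith
  have hτL : 200 * τ * L ≤ 400 * (τ * Real.log 2) * L := by
    have : 0 ≤ τ * L := by positivity
    nlinarith
  have key : 200 * τ * L ≤ d * L - Real.log n := by nlinarith
  have h := hP (d * L - Real.log n) (le_trans (by positivity) key)
  have hexp : (1 + (Real.exp (d * L - Real.log n) - 1) * Real.exp (-(d * L))) ^ n ≤ Real.exp 1 := by
    have e1 : Real.exp (d * L - Real.log n) * Real.exp (-(d * L)) = 1 / n := by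
      rw [← Real.exp_add, show d * L - Real.log n + -(d * L) = -Real.log n by ring, Real.exp_neg,
        Real.exp_log (by linarith)]; simp
    have e2 : Real.exp (-(d * L)) ≤ 1 := Real.exp_le_one_iff.2 (by
      have : 0 ≤ d * L := by positivity
      linarith)
    have e3 := Real.exp_pos (-(d * L))
    calc _ ≤ (Real.exp (1 / n)) ^ n := by
          apply pow_le_pow_left₀
          · rw [sub_mul, e1]
            have : (0:ℝ) ≤ 1 / n := by positivity
            linarith
          · rw [sub_mul, e1]
            linarith [Real.add_one_le_exp (1 / (n:ℝ))]
      _ = _ := by rw [← Real.exp_nat_mul]; congr 1; field_simp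
  have hc := sse_choose N a ha (by omega)
  have h4 : ((1/4:ℝ)) ^ a = Real.exp (-(a * (2 * Real.log 2))) := by
    rw [show -(a * (2 * Real.log 2)) = a * (-(2 * Real.log 2)) by ring, Real.exp_nat_mul, Real.exp_neg,
      show 2 * Real.log 2 = Real.log 2 + Real.log 2 by ring, Real.exp_add, Real.exp_log (by norm_num)]
    norm_num
  rw [h4]
  have hsk : 200 * a * L ≤ (d * L - Real.log n) * s := by
    calc 200 * a * L ≤ 200 * (s * τ) * L := by gcongr
      _ = (200 * τ * L) * s := by ring
      _ ≤ _ := by gcongr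
  calc P * N.choose a ≤ (Real.exp (-((d * L - Real.log n) * s)) * Real.exp 1) *
        Real.exp (a * (1 + L)) := by
        apply mul_le_mul (h.trans (by gcongr)) hc (by positivity) (by positivity)
    _ = Real.exp (-((d * L - Real.log n) * s) + 1 + a * (1 + L)) := by
        rw [Real.exp_add, Real.exp_add]
    _ ≤ _ := by
        apply Real.exp_le_exp.2
        have : a * L ≥ a * 0.69 := by gcongr; linarith
        nlinarith

set_option maxHeartbeats 1000000 in
/-- large sets -/
lemma sse_large (k τ : ℝ) (hk : 2 ≤ k) (hτ : 1 ≤ τ) (n d a m N : ℕ) (hn : 2 ≤ n) (hnN : n ≤ N)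
    (hd : 400 * (k * Real.log τ + τ * Real.log k + Real.log n) ≤ d) (ha : 1 ≤ a)
    (haN : N ≤ 2 * a) (ham : a + m = N) (hm : (N:ℝ) ≤ m * k) (P s : ℝ) (hs : s = a / τ)
    (hP0 : n < s → P ≤ 0)
    (hP : ∀ θ : ℝ, 0 ≤ θ → P ≤ Real.exp (-(θ * s)) *
      (1 + (Real.exp θ - 1) * Real.exp (-(d * Real.log (N / a)))) ^ n) :
    P * N.choose a ≤ (1/4) ^ m := by
  have ha1 : (1:ℝ) ≤ a := by exact_mod_cast ha
  have haN' : (N:ℝ) ≤ 2 * a := by exact_mod_cast haN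
  have ham' : (a:ℝ) + m = N := by exact_mod_cast ham
  have hn' : (2:ℝ) ≤ n := by exact_mod_cast hn
  have hnN' : (n:ℝ) ≤ N := by exact_mod_cast hnN
  have hN0 : (0:ℝ) < N := by linarith
  have hm0 : (0:ℝ) < m := by
    by_contra hc
    nlinarith
  have hm1 : 1 ≤ m := by exact_mod_cast hm0
  have hl2 := Real.log_two_gt_d9
  have hl2' := Real.log_two_lt_d9
  have hlk : Real.log 2 ≤ Real.log k := Real.log_le_log (by norm_num) hk
  have hln : Real.log 2 ≤ Real.log n := Real.log_le_log (by norm_num) hn'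
  have hlt : 0 ≤ Real.log τ := Real.log_nonneg hτ
  have hklt : 0 ≤ k * Real.log τ := by positivity
  have hd' : 400 * (k * Real.log τ + τ * Real.log k) ≤ d := by linarith
  set L := Real.log (N / a) with hL
  have hLm : (m:ℝ) / N ≤ L := by
    have h := Real.one_sub_inv_le_log_of_pos (show (0:ℝ) < N / a by positivity)
    refine le_trans (le_of_eq ?_) h
    rw [inv_div, ← ham']; field_simp; ring
  set y := d * L with hy
  have hd0 : (0:ℝ) ≤ d := by positivity
  have hyN : d * m ≤ y * N := by
    have : (m:ℝ) ≤ L * N := by rwa [div_le_iff₀ hN0] at hLm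
    rw [hy]; nlinarith
  have hy0 : 0 ≤ y := by
    by_contra hc
    have : 0 ≤ d * (m:ℝ) := by positivity
    nlinarith
  have hyt : 400 * Real.log τ ≤ y := by
    have h1 : 400 * (k * Real.log τ) * m ≤ y * N := le_trans (by gcongr; nlinarith) hyN
    have h2 : y * N ≤ y * (m * k) := by gcongr
    have h3 : (400 * Real.log τ) * (m * k) ≤ y * (m * k) := by linarith
    exact le_of_mul_le_mul_right h3 (by positivity)
  have hc : (N.choose a : ℝ) ≤ Real.exp (m * (1 + Real.log k)) := by
    have h := sse_choose N m hm1 (by omega)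
    rw [← ham, Nat.choose_symm_add, ham]
    refine h.trans (Real.exp_le_exp.2 ?_)
    gcongr
    rw [div_le_iff₀ hm0]; linarith
  have h4 : ((1/4:ℝ)) ^ m = Real.exp (-(m * (2 * Real.log 2))) := by
    rw [show -(m * (2 * Real.log 2)) = m * (-(2 * Real.log 2)) by ring, Real.exp_nat_mul, Real.exp_neg,
      show 2 * Real.log 2 = Real.log 2 + Real.log 2 by ring, Real.exp_add, Real.exp_log (by norm_num)]
    norm_num
  rw [h4]
  have hs0 : 0 ≤ s := by rw [hs]; positivity
  have hNs : (N:ℝ) ≤ 2 * τ * s := by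
    rw [hs]; field_simp; exact haN'
  suffices hmain : P ≤ Real.exp (-(m * (4 * Real.log k + 1))) ∨ P ≤ 0 by
    rcases hmain with hmain | hmain
    · calc P * N.choose a ≤ Real.exp (-(m * (4 * Real.log k + 1))) * Real.exp (m * (1 + Real.log k)) := by
            gcongr
        _ ≤ _ := by
          rw [← Real.exp_add]
          apply Real.exp_le_exp.2
          nlinarith
    · exact le_trans (mul_nonpos_of_nonpos_of_nonneg hmain (by positivity)) (Real.exp_pos _).le
  by_cases hI : 4 ≤ y ∧ 2 * Real.log (2 * τ) ≤ y
  · left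
    obtain ⟨hy4, hyτ⟩ := hI
    refine (hP (y / 2) (by linarith)).trans ?_
    have e1 : (1 + (Real.exp (y/2) - 1) * Real.exp (-y)) ^ n ≤ Real.exp (n * Real.exp (-(y/2))) := by
      rw [Real.exp_nat_mul]
      have e0 : Real.exp (y/2) * Real.exp (-y) = Real.exp (-(y/2)) := by
        rw [← Real.exp_add]; congr 1; ring
      have e3 := Real.exp_pos (-y)
      have e4 : 1 ≤ Real.exp (y/2) := Real.one_le_exp (by linarith)
      apply pow_le_pow_left₀
      · nlinarith
      · rw [sub_mul, e0]
        linarith [Real.add_one_le_exp (Real.exp (-(y/2)))]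
    have e2 : Real.exp (-(y/2)) ≤ 1 / (2 * τ) := by
      rw [Real.exp_neg, one_div]
      apply inv_anti₀ (by positivity)
      rw [← Real.log_le_iff_le_exp (by positivity)]; linarith
    have e3 : n * Real.exp (-(y/2)) ≤ s * y / 4 := by
      calc n * Real.exp (-(y/2)) ≤ (2 * τ * s) * (1 / (2 * τ)) := by
            gcongr; linarith
        _ = s := by field_simp
        _ ≤ _ := by nlinarith
    have e5 : m * (4 * Real.log k + 1) ≤ s * y / 4 := by
      have f1 : d * m ≤ y * (2 * τ * s) := hyN.trans (by gcongr)
      have f2 : 400 * (τ * Real.log k) * m ≤ d * m := by gcongr; linarith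
      have f3 : (200 * Real.log k * m) * τ ≤ (y * s) * τ := by linarith
      have f4 := le_of_mul_le_mul_right f3 (by linarith)
      have f5 : m * 0.69 ≤ m * Real.log k := by gcongr; linarith
      linarith
    calc _ ≤ Real.exp (-(y / 2 * s)) * Real.exp (s * y / 4) := by
          gcongr
          exact e1.trans (Real.exp_le_exp.2 e3)
      _ ≤ _ := by
        rw [← Real.exp_add]
        apply Real.exp_le_exp.2
        linarith
  · have hτ2 : τ < 2 := by
      by_contra hc
      apply hI
      have : Real.log 2 ≤ Real.log τ := Real.log_le_log (by norm_num) (by linarith)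
      refine ⟨by linarith, ?_⟩
      rw [Real.log_mul (by norm_num) (by linarith)]
      linarith
    have hy4 : y < 4 := by
      by_contra hc
      apply hI
      refine ⟨by linarith, ?_⟩
      rw [Real.log_mul (by norm_num) (by linarith)]
      have : Real.log τ ≤ Real.log 2 := Real.log_le_log (by linarith) hτ2.le
      linarith
    by_cases hns : n < s
    · right; exact hP0 hns
    left
    push Not at hns
    refine (hP (Real.log 2) (by linarith)).trans ?_
    rw [Real.exp_log (by norm_num)]
    have hp : y / 5 ≤ 1 - Real.exp (-y) := by
      have h1 : Real.exp (-y) ≤ 1 / (1 + y) := by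
        rw [Real.exp_neg, one_div]
        apply inv_anti₀ (by linarith)
        linarith [Real.add_one_le_exp y]
      have h2 : 1 / (1 + y) ≤ 1 - y / 5 := by
        rw [div_le_iff₀ (by linarith)]; nlinarith
      linarith
    have e1 : (1 + (2 - 1) * Real.exp (-y)) ^ n ≤ Real.exp (n * (Real.log 2 - y / 10)) := by
      rw [Real.exp_nat_mul, Real.exp_sub, Real.exp_log (by norm_num), div_eq_mul_inv, ← Real.exp_neg]
      apply pow_le_pow_left₀
      · have := Real.exp_pos (-y); linarith
      · linarith [Real.add_one_le_exp (-(y/10))]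
    have hnN4 : (N:ℝ) ≤ 4 * n := by nlinarith
    have e2 : (n - s) ≤ m * (k * Real.log τ) + m := by
      have h1 := Real.one_sub_inv_le_log_of_pos (show (0:ℝ) < τ by linarith)
      have h2 : N - s = N * (1 - τ⁻¹) + m * τ⁻¹ := by
        rw [hs, ← ham']; field_simp; ring
      have h3 : τ⁻¹ ≤ 1 := inv_le_one_of_one_le₀ hτ
      have h4 : N * (1 - τ⁻¹) ≤ (m * k) * Real.log τ := by
        apply mul_le_mul hm h1 (by linarith) (by positivity)
      have h5 : m * τ⁻¹ ≤ m := by nlinarith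
      linarith
    have e3 : 10 * (m * (k * Real.log τ)) + 10 * (m * Real.log k) ≤ n * (y / 10) := by
      have f1 : d * m ≤ y * (4 * n) := hyN.trans (by gcongr)
      have f2 : 400 * (k * Real.log τ + τ * Real.log k) * m ≤ d * m := by gcongr
      have f3 : Real.log k * m ≤ τ * Real.log k * m := by
        have : 0 ≤ Real.log k * m := by apply mul_nonneg <;> linarith
        nlinarith
      nlinarith
    calc _ ≤ Real.exp (-(Real.log 2 * s)) * Real.exp (n * (Real.log 2 - y / 10)) := by
          gcongr
      _ ≤ _ := by
        rw [← Real.exp_add]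
        apply Real.exp_le_exp.2
        have g1 : Real.log 2 * (n - s) ≤ n - s := by nlinarith
        have g2 : m * 0.69 ≤ m * Real.log k := by gcongr; linarith
        have g3 : 0 ≤ m * (k * Real.log τ) := by positivity
        nlinarith

lemma sse_bound {β γ : Type} [Fintype β] [Fintype γ] [DecidableEq β] [DecidableEq γ]
    (k τ : ℝ) (hk : 2 ≤ k) (hτ : 1 ≤ τ) (n d N : ℕ) (hn : 2 ≤ n) (hnN : n ≤ N)
    (hβ : Fintype.card β = n) (hγ : Fintype.card γ = N)
    (hd : 400 * (k * Real.log τ + τ * Real.log k + Real.log n) ≤ d)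
    (A' : Finset γ) (a : ℕ) (ha : A'.card = a) (ha1 : 1 ≤ a) (hak : (a : ℝ) ≤ (1 - 1 / k) * N) :
    ((Finset.univ.filter (fun g : β → Fin d → γ =>
      a / τ < ((Finset.univ.filter (fun b => ∀ i, g b i ∈ A')).card : ℝ))).card : ℝ) /
        ((N : ℝ) ^ d) ^ n * N.choose a ≤ (1/4) ^ a + (1/4) ^ (N - a) := by
  have ha0 : (0:ℝ) < a := by exact_mod_cast ha1
  have hN0 : (0:ℝ) < N := by exact_mod_cast (by omega : 0 < N)
  have hk0 : 0 < k := by linarith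
  have haN : (a:ℝ) ≤ N := by
    have : 0 < 1 / k := by positivity
    nlinarith
  have haN' : a ≤ N := by exact_mod_cast haN
  set E := (Finset.univ.filter (fun g : β → Fin d → γ =>
      a / τ < ((Finset.univ.filter (fun b => ∀ i, g b i ∈ A')).card : ℝ))) with hE
  have hq : ((a:ℝ) / N) ^ d = Real.exp (-(d * Real.log (N / a))) := by
    rw [← mul_neg, ← Real.log_inv, inv_div, Real.exp_nat_mul, Real.exp_log (by positivity)]
  have hgen : ∀ s : ℝ, (∀ g ∈ E, s ≤ ((Finset.univ.filter (fun b => ∀ i, g b i ∈ A')).card : ℝ)) →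
      ∀ θ : ℝ, 0 ≤ θ → (E.card : ℝ) / ((N : ℝ) ^ d) ^ n ≤ Real.exp (-(θ * s)) *
      (1 + (Real.exp θ - 1) * Real.exp (-(d * Real.log (N / a)))) ^ n := by
    intro s hs θ hθ
    have h := sse_markov (β := β) d A' θ s hθ
    rw [hβ, hγ, ha] at h
    have hsub : (E.card : ℝ) ≤ (Finset.univ.filter (fun g : β → Fin d → γ =>
      s ≤ ((Finset.univ.filter (fun b => ∀ i, g b i ∈ A')).card : ℝ))).card := by
      exact_mod_cast Finset.card_le_card (fun g hg => by simpa using hs g hg)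
    have h2 : (E.card : ℝ) * Real.exp (θ * s) ≤ _ := le_trans (by gcongr) h
    rw [← hq, div_le_iff₀ (by positivity), mul_assoc, ← mul_pow, Real.exp_neg,
      le_inv_mul_iff₀ (Real.exp_pos _), mul_comm]
    refine h2.trans (le_of_eq ?_)
    congr 1
    rw [div_pow]; field_simp
  rcases le_total (2 * a) N with h2 | h2
  · have := sse_small k τ hk hτ n d a N hn hd ha1 h2 _ (max 1 (a / τ)) (le_max_left _ _)
      (by
        have : (a:ℝ) = a / τ * τ := by field_simp
        rw [this]
        refine mul_le_mul_of_nonneg_right ?_ (by linarith)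
        rw [← this]; exact le_max_right _ _)
      (hgen _ (by
        intro g hg
        rw [hE, Finset.mem_filter] at hg
        refine max_le ?_ hg.2.le
        have h0 : (0:ℝ) < ((Finset.univ.filter (fun b => ∀ i, g b i ∈ A')).card : ℝ) :=
          lt_of_le_of_lt (by positivity) hg.2
        exact_mod_cast h0))
    refine this.trans ?_
    have : (0:ℝ) ≤ (1/4) ^ (N - a) := by positivity
    linarith
  · have hm : (N:ℝ) ≤ ((N - a : ℕ) : ℝ) * k := by
      rw [Nat.cast_sub haN']
      have : (1 - 1 / k) * N * k = N * k - N := by field_simp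
      nlinarith
    have := sse_large k τ hk hτ n d a (N - a) N hn hnN hd ha1 h2 (by omega) hm
      ((E.card : ℝ) / ((N : ℝ) ^ d) ^ n) (a / τ) rfl
      (by
        intro hlt
        have : E = ∅ := by
          rw [hE, Finset.filter_eq_empty_iff]
          intro g _
          push Not
          refine le_trans ?_ hlt.le
          rw [← hβ]
          exact_mod_cast Finset.card_le_univ _
        rw [this]; simp)
      (hgen _ (by
        intro g hg
        rw [hE, Finset.mem_filter] at hg
        exact hg.2.le))
    refine this.trans ?_
    have : (0:ℝ) ≤ (1/4) ^ a := by positivity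
    linarith

lemma sse_geom (N : ℕ) : ∑ a ∈ Finset.range (N + 1),
    (if 1 ≤ a ∧ a < N then ((1/4:ℝ)) ^ a + (1/4) ^ (N - a) else 0) < 1 := by
  have hg : ∀ M : ℕ, ∑ a ∈ Finset.range M, ((1/4:ℝ)) ^ (a + 1) ≤ 1 / 3 := by
    intro M
    have : ∑ a ∈ Finset.range M, ((1/4:ℝ)) ^ (a + 1) = 1/3 - 1/3 * (1/4) ^ M := by
      induction M with
      | zero => simp
      | succ M ih => rw [Finset.sum_range_succ, ih]; ring
    rw [this]
    have : (0:ℝ) ≤ (1/4) ^ M := by positivity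
    linarith
  rcases N with _ | M
  · simp
  rw [Finset.sum_range_succ, Finset.sum_range_succ']
  rw [if_neg (by omega : ¬ (1 ≤ 0 ∧ 0 < M + 1)), if_neg (by omega : ¬ (1 ≤ M + 1 ∧ M + 1 < M + 1)),
    add_zero, add_zero]
  have h1 : ∑ a ∈ Finset.range M, (if 1 ≤ a + 1 ∧ a + 1 < M + 1 then ((1/4:ℝ)) ^ (a + 1) +
      (1/4) ^ (M + 1 - (a + 1)) else 0) =
      ∑ a ∈ Finset.range M, ((1/4:ℝ)) ^ (a + 1) + ∑ a ∈ Finset.range M, ((1/4:ℝ)) ^ (a + 1) := by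
    conv_rhs => rw [← Finset.sum_range_reflect (fun a => ((1/4:ℝ)) ^ (a + 1)) M, add_comm]
    rw [Finset.sum_range_reflect (fun a => ((1/4:ℝ)) ^ (a + 1)) M]
    have hrefl := Finset.sum_range_reflect (fun a => ((1/4:ℝ)) ^ (a + 1)) M
    nth_rw 2 [← hrefl]
    rw [← Finset.sum_add_distrib]
    refine Finset.sum_congr rfl fun a ha => ?_
    rw [Finset.mem_range] at ha
    rw [if_pos (by omega), show M + 1 - (a + 1) = M - 1 - a + 1 by omega]
  rw [h1]
  linarith [hg M]

lemma sse_core {β γ : Type} [Fintype β] [Fintype γ] [DecidableEq β] [DecidableEq γ]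
    (k τ : ℝ) (hk : 2 ≤ k) (hτ : 1 ≤ τ) (n d N : ℕ) (hn : 2 ≤ n) (hnN : n ≤ N)
    (hβ : Fintype.card β = n) (hγ : Fintype.card γ = N)
    (hd : 400 * (k * Real.log τ + τ * Real.log k + Real.log n) ≤ d) (hd1 : 1 ≤ d) :
    ∃ g : β → Fin d → γ, ∀ A' : Finset γ, (A'.card : ℝ) ≤ (1 - 1 / k) * N →
      ((Finset.univ.filter (fun b => ∀ i, g b i ∈ A')).card : ℝ) ≤ A'.card / τ := by
  by_contra hcon
  push Not at hcon
  have hN0 : (0:ℝ) < N := by exact_mod_cast (by omega : 0 < N)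
  set E : Finset γ → Finset (β → Fin d → γ) := fun A' => Finset.univ.filter (fun g =>
    (A'.card : ℝ) ≤ (1 - 1 / k) * N ∧
      A'.card / τ < ((Finset.univ.filter (fun b => ∀ i, g b i ∈ A')).card : ℝ)) with hE
  have hcov : (Finset.univ : Finset (β → Fin d → γ)) ⊆
      (Finset.univ : Finset (Finset γ)).biUnion E := by
    intro g _
    obtain ⟨A', h1, h2⟩ := hcon g
    simp only [Finset.mem_biUnion, Finset.mem_univ, true_and, hE, Finset.mem_filter]
    exact ⟨A', h1, h2⟩
  have hcard : ((N:ℝ) ^ d) ^ n ≤ ∑ A' : Finset γ, ((E A').card : ℝ) := by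
    have h := (Finset.card_le_card hcov).trans Finset.card_biUnion_le
    simp only [Finset.card_univ, Fintype.card_fun, Fintype.card_fin, hβ, hγ] at h
    exact_mod_cast h
  set r : ℕ → ℝ := fun a => (if 1 ≤ a ∧ a < N then ((1/4:ℝ)) ^ a + (1/4) ^ (N - a) else 0) /
    N.choose a with hr
  have hEr : ∀ A' : Finset γ, ((E A').card : ℝ) / ((N:ℝ) ^ d) ^ n ≤ r A'.card := by
    intro A'
    by_cases hA : (A'.card : ℝ) ≤ (1 - 1 / k) * N
    · have hlt : A'.card < N := by
        have : 0 < 1 / k := by positivity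
        have : (A'.card : ℝ) < N := by nlinarith
        exact_mod_cast this
      by_cases h1 : 1 ≤ A'.card
      · have h := sse_bound (β := β) k τ hk hτ n d N hn hnN hβ hγ hd A' _ rfl h1 hA
        have hc : (0:ℝ) < N.choose A'.card := by exact_mod_cast Nat.choose_pos hlt.le
        simp only [hr]
        rw [if_pos ⟨h1, hlt⟩, le_div_iff₀ hc]
        simpa only [hE, hA, true_and] using h
      · have h0 : A' = ∅ := by
          rw [← Finset.card_eq_zero]; omega
        have : E A' = ∅ := by
          simp only [hE]
          rw [Finset.filter_eq_empty_iff]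
          rintro g _ ⟨_, h⟩
          subst h0
          have : (Finset.univ.filter (fun b => ∀ i, g b i ∈ (∅ : Finset γ))) = ∅ := by
            rw [Finset.filter_eq_empty_iff]
            intro b _ hb
            exact absurd (hb ⟨0, hd1⟩) (Finset.notMem_empty _)
          rw [this] at h
          simp at h
        rw [this]; simp [hr, h0]
    · have : E A' = ∅ := by
        simp only [hE]
        rw [Finset.filter_eq_empty_iff]
        rintro g _ ⟨h, _⟩
        exact hA h
      rw [this]
      simp only [Finset.card_empty, Nat.cast_zero, zero_div, hr]
      split_ifs <;> positivity
  have hsum : ∑ A' : Finset γ, r A'.card < 1 := by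
    rw [← Finset.powerset_univ, Finset.sum_powerset_apply_card, Finset.card_univ, hγ]
    refine lt_of_le_of_lt (Finset.sum_le_sum fun a ha => ?_) (sse_geom N)
    rw [Finset.mem_range] at ha
    have hc : (0:ℝ) < N.choose a := by exact_mod_cast Nat.choose_pos (by omega)
    rw [nsmul_eq_mul]
    exact (mul_div_cancel₀ _ hc.ne').le
  have hpos : (0:ℝ) < ((N:ℝ) ^ d) ^ n := by positivity
  have : (1:ℝ) ≤ ∑ A' : Finset γ, ((E A').card : ℝ) / ((N:ℝ) ^ d) ^ n := by
    rw [← Finset.sum_div, le_div_iff₀ hpos, one_mul]; exact hcard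
  linarith [Finset.sum_le_sum (fun A' (_ : A' ∈ (Finset.univ : Finset (Finset γ))) => hEr A')]

/-- There is an absolute constant `C > 0` such that for all `k ≥ 2`, `τ ≥ 1` and all
disjoint finite sets `A`, `B` with `|A| ≥ |B| ≥ 2`, there is a bipartite graph `H`
between `A` and `B`, in which every vertex of `B` has a neighbour, with at most
`C·|B|·(k·log τ + τ·log k + log |B|)` edges, such that for every `A' ⊆ A` with
`|A'| ≤ (1 - 1/k)·|A|`, the shadow `{b ∈ B : N_H(b) ⊆ A'}` has size at most `|A'|/τ`. -/
theorem shrinking_shadow_expander_exists :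
    ∃ C : ℝ, 0 < C ∧
      ∀ k τ : ℝ, 2 ≤ k → 1 ≤ τ →
      ∀ (α : Type) (A B : Finset α), Disjoint A B → B.card ≤ A.card → 2 ≤ B.card →
      ∃ H : SimpleGraph α,
        (∀ x y, H.Adj x y → (x ∈ A ∧ y ∈ B) ∨ (x ∈ B ∧ y ∈ A)) ∧
        (∀ b ∈ B, ∃ a, H.Adj b a) ∧
        (H.edgeSet.ncard : ℝ) ≤
          C * B.card * (k * Real.log τ + τ * Real.log k + Real.log B.card) ∧
        ∀ A' : Finset α, A' ⊆ A → (A'.card : ℝ) ≤ (1 - 1 / k) * A.card →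
          ({b | b ∈ B ∧ ∀ y, H.Adj b y → y ∈ A'}.ncard : ℝ) ≤ A'.card / τ := by
  classical
  refine ⟨401, by norm_num, ?_⟩
  intro k τ hk hτ α A B hAB hBA hB
  have hn' : (2:ℝ) ≤ B.card := by exact_mod_cast hB
  have hl2 := Real.log_two_gt_d9
  have hlk : Real.log 2 ≤ Real.log k := Real.log_le_log (by norm_num) hk
  have hln : Real.log 2 ≤ Real.log B.card := Real.log_le_log (by norm_num) hn'
  have hlt : 0 ≤ Real.log τ := Real.log_nonneg hτ
  have hklt : 0 ≤ k * Real.log τ := by positivity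
  set D := k * Real.log τ + τ * Real.log k + Real.log B.card with hD
  have hD1 : 1 ≤ D := by nlinarith
  set d := ⌈400 * D⌉₊ with hd
  have hdD : 400 * D ≤ d := Nat.le_ceil _
  have hd1 : 1 ≤ d := by
    have : (1:ℝ) ≤ d := by linarith
    exact_mod_cast this
  have hdC : (d:ℝ) ≤ 401 * D := by
    have := Nat.ceil_lt_add_one (show 0 ≤ 400 * D by linarith)
    linarith
  obtain ⟨g, hg⟩ := sse_core (β := B) (γ := A) k τ hk hτ B.card d A.card hB hBA
    (Fintype.card_coe B) (Fintype.card_coe A) hdD hd1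
  have hdis : ∀ x, x ∈ A → x ∈ B → False := fun x h1 h2 => Finset.disjoint_left.1 hAB h1 h2
  set R : α → α → Prop := fun x y => ∃ (b : B) (i : Fin d), x = b ∧ y = g b i with hR
  have hRm : ∀ x y, R x y → x ∈ B ∧ y ∈ A := by
    rintro x y ⟨b, i, rfl, rfl⟩
    exact ⟨b.2, (g b i).2⟩
  refine ⟨{ Adj := fun x y => R x y ∨ R y x
            symm := ⟨fun x y h => h.symm⟩
            loopless := ⟨fun x h => ?_⟩ }, ?_, ?_, ?_, ?_⟩
  · have : x ∈ B ∧ x ∈ A := by rcases h with h | h <;> exact hRm x x h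
    exact hdis x this.2 this.1
  · rintro x y (h | h)
    · exact Or.inr (hRm _ _ h)
    · exact Or.inl (hRm _ _ h).symm
  · intro b hb
    exact ⟨g ⟨b, hb⟩ ⟨0, hd1⟩, Or.inl ⟨⟨b, hb⟩, ⟨0, hd1⟩, rfl, rfl⟩⟩
  · set F : Finset (Sym2 α) := (Finset.univ : Finset (B × Fin d)).image
      (fun p => s((p.1 : α), (g p.1 p.2 : α))) with hF
    have hFc : F.card ≤ B.card * d := by
      refine Finset.card_image_le.trans ?_
      simp
    refine le_trans (b := (F.card : ℝ)) ?_ ?_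
    · rw [← Set.ncard_coe_finset F]
      apply Nat.cast_le.2
      refine Set.ncard_le_ncard ?_ (Finset.finite_toSet F)
      intro e
      induction e using Sym2.ind with
      | _ x y =>
        intro h
        rw [SimpleGraph.mem_edgeSet] at h
        simp only [hF, Finset.coe_image, Set.mem_image, Finset.coe_univ, Set.mem_univ, true_and]
        rcases h with ⟨b, i, rfl, rfl⟩ | ⟨b, i, rfl, rfl⟩
        · exact ⟨(b, i), rfl⟩
        · exact ⟨(b, i), Sym2.eq_swap⟩
    · calc (F.card : ℝ) ≤ B.card * d := by exact_mod_cast hFc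
        _ ≤ B.card * (401 * D) := by gcongr
        _ = _ := by ring
  · intro A' hA' hcard
    have hc : (A'.subtype (· ∈ A)).card = A'.card := by
      rw [Finset.card_subtype, Finset.filter_true_of_mem (fun x hx => hA' hx)]
    have h := hg (A'.subtype (· ∈ A)) (by rw [hc]; exact hcard)
    rw [hc] at h
    refine le_trans ?_ h
    rw [← Finset.card_map (Function.Embedding.subtype (· ∈ B)), ← Set.ncard_coe_finset]
    apply Nat.cast_le.2
    refine Set.ncard_le_ncard ?_ (Finset.finite_toSet _)
    rintro b ⟨hb, hb2⟩
    simp only [Finset.coe_map, Set.mem_image, Finset.mem_coe, Finset.mem_filter, Finset.mem_univ,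
      true_and, Finset.mem_subtype]
    exact ⟨⟨b, hb⟩, fun i => hb2 _ (Or.inl ⟨⟨b, hb⟩, i, rfl, rfl⟩), rfl⟩
end

section
/- For every integer d ≥ 1 there exists a constant C > 0 such that for every real s ≥ 1 and every finite point set P ⊂ ℝ^d with |P| = n ≥ 2, there exist an integer m ≤ C · s^d · n and pairs (A_1, B_1), …, (A_m, B_m) of nonempty subsets of P such that: (i) for every i ∈ {1, …, m}, dist(A_i, B_i) ≥ s · max(diam(A_i), diam(B_i)); and (ii) for every pair of distinct points p, q ∈ P there exists exactly one index i ∈ {1, …, m} such that (p ∈ A_i and q ∈ B_i) or (q ∈ A_i and p ∈ B_i). -/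
/-- Number of elements with a sibling under `h`. -/
lemma wspd_card_step {β : Type*} [DecidableEq β] (Q : Finset β) (h : β → β) :
    (Q.filter (fun a => ∃ b ∈ Q, b ≠ a ∧ h b = h a)).card + 2 * (Q.image h).card
      ≤ 2 * Q.card := by
  classical
  set R := Q.filter (fun a => ∃ b ∈ Q, b ≠ a ∧ h b = h a) with hR
  have h1 : Q.card = ∑ c ∈ Q.image h, (Q.filter (fun a => h a = c)).card :=
    Finset.card_eq_sum_card_fiberwise (fun a ha => Finset.mem_image_of_mem h ha)
  have h2 : R.card = ∑ c ∈ Q.image h, (R.filter (fun a => h a = c)).card :=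
    Finset.card_eq_sum_card_fiberwise
      (fun a ha => Finset.mem_image_of_mem h (Finset.filter_subset _ _ ha))
  rw [h1, h2, Finset.mul_sum, Finset.card_eq_sum_ones (Q.image h), Finset.mul_sum,
    ← Finset.sum_add_distrib]
  refine Finset.sum_le_sum fun c hc => ?_
  obtain ⟨a, ha, rfl⟩ := Finset.mem_image.1 hc
  have hsub : (R.filter (fun x => h x = h a)).card ≤ (Q.filter (fun x => h x = h a)).card :=
    Finset.card_le_card (Finset.filter_subset_filter _ (Finset.filter_subset _ _))
  have hpos : 0 < (Q.filter (fun x => h x = h a)).card :=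
    Finset.card_pos.2 ⟨a, by simp [ha]⟩
  by_cases h3 : 2 ≤ (Q.filter (fun x => h x = h a)).card
  · omega
  · have h4 : (R.filter (fun x => h x = h a)).card = 0 := by
      rw [Finset.card_eq_zero, Finset.eq_empty_iff_forall_notMem]
      intro x hx
      simp only [hR, Finset.mem_filter] at hx
      obtain ⟨⟨hxQ, b, hb, hbx, hhb⟩, hxa⟩ := hx
      apply h3
      have : 1 < (Q.filter (fun x => h x = h a)).card := by
        rw [Finset.one_lt_card]
        exact ⟨b, by simp [hb, hhb, hxa], x, by simp [hxQ, hxa], hbx⟩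
      exact this
    omega

/-- The combinatorial core. -/
lemma wspd_comb {α β : Type*} [DecidableEq α] [DecidableEq β] (P : Finset α)
    (f : ℕ → α → β) (h : β → β) (hf : ∀ k p, f k p = h (f (k+1) p))
    (Sep : Finset α → Finset α → Prop) (hsymm : ∀ A B, Sep A B → Sep B A)
    (h0 : ∀ p ∈ P, ∀ q ∈ P, p ≠ q →
      ¬ Sep (P.filter (fun x => f 0 x = f 0 p)) (P.filter (fun x => f 0 x = f 0 q)))
    (K : ℕ) (hK : ∀ p ∈ P, ∀ q ∈ P, p ≠ q →
      Sep (P.filter (fun x => f K x = f K p)) (P.filter (fun x => f K x = f K q)))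
    (hmono : ∀ A B A' B', A' ⊆ A → B' ⊆ B → Sep A B → Sep A' B')
    (box : β → Finset β) (N : ℕ) (hN : ∀ b, (box b).card ≤ N)
    (hbox : ∀ k, ∀ p ∈ P, ∀ q ∈ P,
      ¬ Sep (P.filter (fun x => f k x = f k p)) (P.filter (fun x => f k x = f k q)) →
      f (k+1) q ∈ box (f (k+1) p)) :
    ∃ W : Finset (Finset α × Finset α), W.card ≤ N * (2 * P.card) ∧
      (∀ w ∈ W, w.1.Nonempty ∧ w.2.Nonempty ∧ w.1 ⊆ P ∧ w.2 ⊆ P ∧ Sep w.1 w.2) ∧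
      ∀ p ∈ P, ∀ q ∈ P, p ≠ q →
        ∃! w, w ∈ W ∧ ((p ∈ w.1 ∧ q ∈ w.2) ∨ (q ∈ w.1 ∧ p ∈ w.2)) := by
  classical
  set cell : ℕ → β → Finset α := fun k b => P.filter (fun x => f k x = b) with hcell
  set prop : ℕ → Finset β := fun k =>
    (P.image (f (k+1))).filter (fun a => ∃ b ∈ P.image (f (k+1)), b ≠ a ∧ h b = h a) with hprop
  -- candidate triples
  let Z : Finset (Sym2 (Finset α)) := (Finset.range K).biUnion fun k =>
    (prop k).biUnion fun a => (box a).image fun b => s(cell (k+1) a, cell (k+1) b)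
  have hZ : Z.card ≤ N * (2 * P.card) := by
    have hstep : ∀ n, ∑ k ∈ Finset.range n, (prop k).card + 2 * (P.image (f 0)).card
        ≤ 2 * (P.image (f n)).card := by
      intro n
      induction n with
      | zero => simp
      | succ n ih =>
        rw [Finset.sum_range_succ]
        have := wspd_card_step (P.image (f (n+1))) h
        have h2 : (P.image (f (n+1))).image h = P.image (f n) := by
          rw [Finset.image_image]
          refine Finset.image_congr fun x _ => ?_
          simp [hf n x]
        rw [h2] at this
        have h3 : (prop n).card + 2 * (P.image (f n)).card ≤ 2 * (P.image (f (n+1))).card := by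
          convert this
        omega
    have hsum : ∑ k ∈ Finset.range K, (prop k).card ≤ 2 * P.card := by
      have := hstep K
      have := Finset.card_image_le (s := P) (f := f K)
      omega
    calc Z.card ≤ ∑ k ∈ Finset.range K, ∑ a ∈ prop k, N := by
          refine Finset.card_biUnion_le.trans (Finset.sum_le_sum fun k _ => ?_)
          refine Finset.card_biUnion_le.trans (Finset.sum_le_sum fun a _ => ?_)
          exact Finset.card_image_le.trans (hN a)
      _ = N * ∑ k ∈ Finset.range K, (prop k).card := by
          simp [Finset.mul_sum, mul_comm]
      _ ≤ _ := Nat.mul_le_mul_left _ hsum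
  -- nested cells
  have hnest : ∀ k p, cell (k+1) (f (k+1) p) ⊆ cell k (f k p) := by
    intro k p x hx
    simp only [hcell, Finset.mem_filter] at hx ⊢
    exact ⟨hx.1, by rw [hf k x, hf k p, hx.2]⟩
  have hcong : ∀ k x p, f k x = f k p → ∀ j ≤ k, f j x = f j p := by
    intro k x p hxp j hj
    induction k with
    | zero => obtain rfl : j = 0 := by omega
              exact hxp
    | succ k ih =>
      rcases Nat.lt_or_ge j (k+1) with h1 | h1
      · exact ih (by rw [hf k x, hf k p, hxp]) (by omega)
      · obtain rfl : j = k+1 := by omega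
        exact hxp
  let S : α → α → ℕ → Prop := fun p q k => Sep (cell k (f k p)) (cell k (f k q))
  have hSmono : ∀ p q k, S p q k → S p q (k+1) := fun p q k hs =>
    hmono _ _ _ _ (hnest k p) (hnest k q) hs
  have hSmono' : ∀ p q k l, k ≤ l → S p q k → S p q l := by
    intro p q k l hkl hs
    induction l, hkl using Nat.le_induction with
    | base => exact hs
    | succ l _ ih => exact hSmono _ _ _ ih
  -- first separation level
  let First : α → α → ℕ → Prop := fun p q k => k < K ∧ ¬ S p q k ∧ S p q (k+1)
  have hFirst : ∀ p ∈ P, ∀ q ∈ P, p ≠ q → ∃ k, First p q k := by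
    intro p hp q hq hpq
    have hex : ∃ k, S p q k := ⟨K, hK p hp q hq hpq⟩
    have hle : Nat.find hex ≤ K := Nat.find_min' hex (hK p hp q hq hpq)
    have hne : Nat.find hex ≠ 0 := fun h => by
      have := Nat.find_spec hex
      rw [h] at this
      exact h0 p hp q hq hpq this
    obtain ⟨k, hk⟩ := Nat.exists_eq_succ_of_ne_zero hne
    refine ⟨k, by omega, Nat.find_min hex (by omega), ?_⟩
    have := Nat.find_spec hex
    rw [hk] at this
    exact this
  have hFuniq : ∀ p q k l, First p q k → First p q l → k = l := by
    rintro p q k l ⟨_, h1, h2⟩ ⟨_, h3, h4⟩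
    by_contra hne
    rcases Nat.lt_or_gt_of_ne hne with h | h
    · exact h3 (hSmono' _ _ _ _ h h2)
    · exact h1 (hSmono' _ _ _ _ h h4)
  have hFsymm : ∀ p q k, First p q k → First q p k := by
    rintro p q k ⟨h1, h2, h3⟩
    exact ⟨h1, fun h => h2 (hsymm _ _ h), hsymm _ _ h3⟩
  let W0 : Finset (Sym2 (Finset α)) := Z.filter fun w =>
    ∃ p ∈ P, ∃ q ∈ P, ∃ k, First p q k ∧ w = s(cell (k+1) (f (k+1) p), cell (k+1) (f (k+1) q))
  have hW0 : ∀ p ∈ P, ∀ q ∈ P, ∀ k, First p q k →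
      s(cell (k+1) (f (k+1) p), cell (k+1) (f (k+1) q)) ∈ W0 := by
    intro p hp q hq k hk
    refine Finset.mem_filter.2 ⟨?_, p, hp, q, hq, k, hk, rfl⟩
    -- one of the two cells is proper
    have key : ∀ p ∈ P, f (k+1) p ∉ prop k → cell k (f k p) ⊆ cell (k+1) (f (k+1) p) := by
      intro p hp hnp x hx
      simp only [hcell, Finset.mem_filter] at hx ⊢
      refine ⟨hx.1, ?_⟩
      by_contra hne
      apply hnp
      simp only [hprop, Finset.mem_filter]
      exact ⟨Finset.mem_image_of_mem _ hp, f (k+1) x, Finset.mem_image_of_mem _ hx.1, hne,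
        by rw [← hf, ← hf, hx.2]⟩
    have mk : ∀ p ∈ P, ∀ q ∈ P, First p q k → f (k+1) p ∈ prop k →
        s(cell (k+1) (f (k+1) p), cell (k+1) (f (k+1) q)) ∈ Z := by
      intro p hp q hq hk hpr
      refine Finset.mem_biUnion.2 ⟨k, Finset.mem_range.2 hk.1, ?_⟩
      refine Finset.mem_biUnion.2 ⟨_, hpr, ?_⟩
      exact Finset.mem_image.2 ⟨_, hbox k p hp q hq hk.2.1, rfl⟩
    by_cases h1 : f (k+1) p ∈ prop k
    · exact mk p hp q hq hk h1
    by_cases h2 : f (k+1) q ∈ prop k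
    · rw [Sym2.eq_swap]
      exact mk q hq p hp (hFsymm _ _ _ hk) h2
    · exact absurd (hmono _ _ _ _ (key p hp h1) (key q hq h2) hk.2.2) hk.2.1
  have hout : ∀ w : Sym2 (Finset α), s((Quot.out w).1, (Quot.out w).2) = w := fun w => by
    exact Quot.out_eq w
  refine ⟨W0.image Quot.out, ?_, ?_, ?_⟩
  · exact (Finset.card_image_le.trans (Finset.card_filter_le _ _)).trans hZ
  · intro w hw
    obtain ⟨v, hv, rfl⟩ := Finset.mem_image.1 hw
    obtain ⟨_, p, hp, q, hq, k, hk, hvk⟩ := Finset.mem_filter.1 hv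
    have e := (hout v).trans hvk
    have n1 : (cell (k+1) (f (k+1) p)).Nonempty := ⟨p, by simp [hcell, hp]⟩
    have n2 : (cell (k+1) (f (k+1) q)).Nonempty := ⟨q, by simp [hcell, hq]⟩
    rcases Sym2.eq_iff.1 e with ⟨e1, e2⟩ | ⟨e1, e2⟩
    · rw [e1, e2]
      exact ⟨n1, n2, Finset.filter_subset _ _, Finset.filter_subset _ _, hk.2.2⟩
    · rw [e1, e2]
      exact ⟨n2, n1, Finset.filter_subset _ _, Finset.filter_subset _ _, hsymm _ _ hk.2.2⟩
  · intro p hp q hq hpq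
    obtain ⟨k, hk⟩ := hFirst p hp q hq hpq
    refine ⟨Quot.out s(cell (k+1) (f (k+1) p), cell (k+1) (f (k+1) q)),
      ⟨Finset.mem_image_of_mem _ (hW0 p hp q hq k hk), ?_⟩, ?_⟩
    · have n1 : p ∈ (cell (k+1) (f (k+1) p)) := by simp [hcell, hp]
      have n2 : q ∈ (cell (k+1) (f (k+1) q)) := by simp [hcell, hq]
      rcases Sym2.eq_iff.1 (hout s(cell (k+1) (f (k+1) p), cell (k+1) (f (k+1) q)))
        with ⟨e1, e2⟩ | ⟨e1, e2⟩
      · rw [e1, e2]; exact Or.inl ⟨n1, n2⟩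
      · rw [e1, e2]; exact Or.inr ⟨n2, n1⟩
    · rintro w ⟨hw, hmem⟩
      obtain ⟨v, hv, rfl⟩ := Finset.mem_image.1 hw
      obtain ⟨_, p', hp', q', hq', l, hl, hvl⟩ := Finset.mem_filter.1 hv
      congr 1
      have core : ∀ p' q', First p' q' l → p ∈ cell (l+1) (f (l+1) p') →
          q ∈ cell (l+1) (f (l+1) q') →
          s(cell (l+1) (f (l+1) p'), cell (l+1) (f (l+1) q'))
            = s(cell (k+1) (f (k+1) p), cell (k+1) (f (k+1) q)) := by
        intro p' q' hl h1 h2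
        simp only [hcell, Finset.mem_filter] at h1 h2
        have hl' : First p q l := by
          have a1 := hcong _ _ _ h1.2 l (by omega)
          have a2 := hcong _ _ _ h2.2 l (by omega)
          simp only [First, S] at hl ⊢
          rw [a1, a2, h1.2, h2.2]
          exact hl
        obtain rfl := hFuniq _ _ _ _ hl' hk
        rw [h1.2, h2.2]
      rw [hvl]
      have e := (hout v).trans hvl
      have hsw : s(cell (l+1) (f (l+1) p'), cell (l+1) (f (l+1) q'))
        = s(cell (l+1) (f (l+1) q'), cell (l+1) (f (l+1) p')) := Sym2.eq_swap
      rcases Sym2.eq_iff.1 e with ⟨e1, e2⟩ | ⟨e1, e2⟩ <;> rw [e1, e2] at hmem <;>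
        rcases hmem with ⟨m1, m2⟩ | ⟨m1, m2⟩
      · exact core _ _ hl m1 m2
      · rw [hsw]; exact core _ _ (hFsymm _ _ _ hl) m2 m1
      · rw [hsw]; exact core _ _ (hFsymm _ _ _ hl) m1 m2
      · exact core _ _ hl m2 m1

/-- grid index of a point at level `k` -/
noncomputable def wspdGrid (d : ℕ) (L : ℝ) (k : ℕ) (p : EuclideanSpace ℝ (Fin d)) : Fin d → ℤ :=
  fun i => ⌊2 ^ k * ((p i + L) / (2 * L))⌋

lemma wspdGrid_parent (d : ℕ) (L : ℝ) (k : ℕ) (p : EuclideanSpace ℝ (Fin d)) :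
    wspdGrid d L k p = (fun a : Fin d → ℤ => fun i => a i / 2) (wspdGrid d L (k+1) p) := by
  funext i
  simp only [wspdGrid]
  have := Int.floor_div_natCast (2 ^ (k+1) * ((p i + L) / (2 * L)) : ℝ) 2
  push_cast at this
  rw [← this]
  congr 1
  ring

lemma wspdGrid_diff (d : ℕ) (L : ℝ) (hL : 0 < L) (k : ℕ) (p q : EuclideanSpace ℝ (Fin d))
    (i : Fin d) :
    2 ^ k * ((p i + L) / (2 * L)) - 2 ^ k * ((q i + L) / (2 * L))
      = (p i - q i) / (2 * L / 2 ^ k) := by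
  field_simp
  ring

lemma wspdGrid_close (d : ℕ) (L : ℝ) (hL : 0 < L) (k : ℕ) (p q : EuclideanSpace ℝ (Fin d))
    (h : wspdGrid d L k p = wspdGrid d L k q) (i : Fin d) :
    |p i - q i| ≤ 2 * L / 2 ^ k := by
  have h1 := congrFun h i
  simp only [wspdGrid] at h1
  have h2 := (Int.abs_sub_lt_one_of_floor_eq_floor h1).le
  rw [wspdGrid_diff d L hL, abs_div, div_le_one (by positivity)] at h2
  rwa [abs_of_pos (a := 2 * L / 2 ^ k) (by positivity)] at h2

lemma wspdGrid_near (d : ℕ) (L : ℝ) (hL : 0 < L) (k : ℕ) (p q : EuclideanSpace ℝ (Fin d))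
    (i : Fin d) (c : ℝ) (h : |p i - q i| ≤ c * (2 * L / 2 ^ k)) :
    |((wspdGrid d L k q i : ℝ)) - wspdGrid d L k p i| ≤ c + 1 := by
  have hw : 0 < 2 * L / 2 ^ k := by positivity
  have h2 : |2 ^ k * ((p i + L) / (2 * L)) - 2 ^ k * ((q i + L) / (2 * L))| ≤ c := by
    rw [wspdGrid_diff d L hL, abs_div, abs_of_pos hw, div_le_iff₀ hw]
    exact h
  simp only [wspdGrid]
  have a1 := Int.floor_le (2 ^ k * ((p i + L) / (2 * L)))
  have a2 := Int.lt_floor_add_one (2 ^ k * ((p i + L) / (2 * L)))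
  have a3 := Int.floor_le (2 ^ k * ((q i + L) / (2 * L)))
  have a4 := Int.lt_floor_add_one (2 ^ k * ((q i + L) / (2 * L)))
  rw [abs_le] at h2 ⊢
  constructor <;> linarith [h2.1, h2.2]

lemma wspd_dist_le (d : ℕ) (hd : 1 ≤ d) (p q : EuclideanSpace ℝ (Fin d)) (w : ℝ) (hw : 0 ≤ w)
    (h : ∀ i, |p i - q i| ≤ w) : dist p q ≤ d * w := by
  rw [EuclideanSpace.dist_eq]
  apply Real.sqrt_le_iff.2 ⟨by positivity, ?_⟩
  have hd' : (1:ℝ) ≤ d := by exact_mod_cast hd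
  calc ∑ i, dist (p i) (q i) ^ 2 ≤ ∑ _i : Fin d, w ^ 2 := by
        refine Finset.sum_le_sum fun i _ => ?_
        rw [Real.dist_eq]
        exact pow_le_pow_left₀ (abs_nonneg _) (h i) 2
    _ = d * w ^ 2 := by simp
    _ ≤ (d * w) ^ 2 := by
        have h1 : (0:ℝ) ≤ d * (d - 1) * w ^ 2 := by
          have := sub_nonneg.2 hd'
          positivity
        nlinarith

lemma wspd_coord_le (d : ℕ) (p q : EuclideanSpace ℝ (Fin d)) (i : Fin d) :
    |p i - q i| ≤ dist p q := by
  rw [dist_eq_norm]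
  have := PiLp.norm_apply_le (p - q) i
  simpa using this

/-- Callahan–Kosaraju: for every `d ≥ 1` there is a constant `C > 0` such that every
`n`-point set `P ⊆ ℝ^d` (`n ≥ 2`) admits an `s`-well-separated pair decomposition
with at most `C·s^d·n` pairs. -/
theorem wspd_exists :
    ∀ d : ℕ, 1 ≤ d → ∃ C : ℝ, 0 < C ∧
      ∀ s : ℝ, 1 ≤ s →
      ∀ P : Finset (EuclideanSpace ℝ (Fin d)), 2 ≤ P.card →
      ∃ (m : ℕ) (A B : Fin m → Finset (EuclideanSpace ℝ (Fin d))),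
        (m : ℝ) ≤ C * s ^ d * P.card ∧
        (∀ i, (A i).Nonempty ∧ (B i).Nonempty ∧ A i ⊆ P ∧ B i ⊆ P) ∧
        (∀ i, ∀ a ∈ A i, ∀ b ∈ B i,
          s * max (Metric.diam (A i : Set (EuclideanSpace ℝ (Fin d))))
                  (Metric.diam (B i : Set (EuclideanSpace ℝ (Fin d)))) ≤ dist a b) ∧
        (∀ p ∈ P, ∀ q ∈ P, p ≠ q →
          ∃! i, (p ∈ A i ∧ q ∈ B i) ∨ (q ∈ A i ∧ p ∈ B i)) := by
  classical
  intro d hd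
  refine ⟨2 * (3 * (2 * d + 5)) ^ d, by positivity, ?_⟩
  intro s hs P hP
  -- enclosing box
  obtain ⟨L, hL, hPL⟩ : ∃ L : ℝ, 0 < L ∧ ∀ p ∈ P, ∀ i, |p i| < L := by
    refine ⟨∑ p ∈ P, ‖p‖ + 1, by positivity, fun p hp i => ?_⟩
    have h1 : ‖p i‖ ≤ ‖p‖ := PiLp.norm_apply_le p i
    have h2 : ‖p‖ ≤ ∑ p ∈ P, ‖p‖ :=
      Finset.single_le_sum (f := fun p : EuclideanSpace ℝ (Fin d) => ‖p‖)
        (fun _ _ => norm_nonneg _) hp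
    rw [Real.norm_eq_abs] at h1
    linarith
  set f := wspdGrid d L with hfdef
  let Sep : Finset (EuclideanSpace ℝ (Fin d)) → Finset (EuclideanSpace ℝ (Fin d)) → Prop :=
    fun A B => ∀ a ∈ A, ∀ b ∈ B,
      s * max (Metric.diam (A : Set (EuclideanSpace ℝ (Fin d))))
              (Metric.diam (B : Set (EuclideanSpace ℝ (Fin d)))) ≤ dist a b
  have hsymm : ∀ A B, Sep A B → Sep B A := by
    intro A B h a ha b hb
    rw [max_comm, dist_comm]
    exact h b hb a ha
  have hmono : ∀ A B A' B', A' ⊆ A → B' ⊆ B → Sep A B → Sep A' B' := by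
    intro A B A' B' hA hB h a ha b hb
    refine le_trans ?_ (h a (hA ha) b (hB hb))
    refine mul_le_mul_of_nonneg_left ?_ (by linarith)
    exact max_le_max
      (Metric.diam_mono (by exact_mod_cast hA) A.finite_toSet.isBounded)
      (Metric.diam_mono (by exact_mod_cast hB) B.finite_toSet.isBounded)
  have hf0 : ∀ p ∈ P, f 0 p = 0 := by
    intro p hp
    funext i
    have := abs_lt.1 (hPL p hp i)
    simp only [hfdef, wspdGrid, Pi.zero_apply]
    rw [Int.floor_eq_zero_iff]
    constructor
    · have : 0 ≤ p i + L := by linarith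
      positivity
    · rw [pow_zero, one_mul, div_lt_one (by positivity)]
      linarith
  have h0 : ∀ p ∈ P, ∀ q ∈ P, p ≠ q →
      ¬ Sep (P.filter (fun x => f 0 x = f 0 p)) (P.filter (fun x => f 0 x = f 0 q)) := by
    intro p hp q hq hpq h
    have e : ∀ r ∈ P, P.filter (fun x => f 0 x = f 0 r) = P := by
      intro r hr
      refine Finset.filter_true_of_mem fun x hx => ?_
      rw [hf0 x hx, hf0 r hr]
    rw [e p hp, e q hq] at h
    have h1 := h p hp p hp
    rw [dist_self, max_self] at h1
    have h2 : dist p q ≤ Metric.diam (P : Set (EuclideanSpace ℝ (Fin d))) :=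
      Metric.dist_le_diam_of_mem P.finite_toSet.isBounded (by exact_mod_cast hp)
        (by exact_mod_cast hq)
    have h3 : 0 < dist p q := dist_pos.2 hpq
    nlinarith
  have hdist : ∀ k p q, f k p = f k q → dist p q ≤ d * (2 * L / 2 ^ k) := fun k p q h =>
    wspd_dist_le d hd p q _ (by positivity) (wspdGrid_close d L hL k p q h)
  -- separating level
  obtain ⟨K, hKinj⟩ : ∃ K, ∀ p ∈ P, ∀ q ∈ P, p ≠ q → f K p ≠ f K q := by
    have ht : Filter.Tendsto (fun k : ℕ => (d : ℝ) * (2 * L / 2 ^ k)) Filter.atTop (nhds 0) := by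
      have h1 : Filter.Tendsto (fun k : ℕ => ((d : ℝ) * (2 * L)) * (1 / 2 : ℝ) ^ k)
          Filter.atTop (nhds (((d : ℝ) * (2 * L)) * 0)) :=
        (tendsto_pow_atTop_nhds_zero_of_lt_one (by norm_num) (by norm_num)).const_mul _
      rw [mul_zero] at h1
      refine h1.congr fun k => ?_
      rw [one_div, inv_pow]
      ring
    have : ∀ᶠ k in Filter.atTop, ∀ p ∈ P, ∀ q ∈ P, p ≠ q → f k p ≠ f k q := by
      rw [Filter.eventually_all_finset]
      intro p hp
      rw [Filter.eventually_all_finset]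
      intro q hq
      by_cases hpq : p = q
      · exact Filter.Eventually.of_forall fun k h => absurd hpq h
      · filter_upwards [ht.eventually_lt_const (dist_pos.2 hpq)] with k hk _ he
        exact absurd (hdist k p q he) (not_le.2 hk)
    exact this.exists
  have hK : ∀ p ∈ P, ∀ q ∈ P, p ≠ q →
      Sep (P.filter (fun x => f K x = f K p)) (P.filter (fun x => f K x = f K q)) := by
    intro p hp q hq hpq a ha b hb
    have e : ∀ r ∈ P, P.filter (fun x => f K x = f K r) = {r} := by
      intro r hr
      ext x
      simp only [Finset.mem_filter, Finset.mem_singleton]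
      constructor
      · rintro ⟨hx, hxr⟩
        by_contra hne
        exact hKinj x hx r hr hne hxr
      · rintro rfl
        exact ⟨hr, rfl⟩
    rw [e p hp, e q hq]
    simp
  -- boxes
  set R : ℤ := ⌊s * (2 * d + 5)⌋ with hR
  have hsR : 1 ≤ s * (2 * d + 5) := by nlinarith [(Nat.cast_nonneg d : (0:ℝ) ≤ d)]
  have hRpos : 0 ≤ R := Int.floor_nonneg.2 (by linarith)
  let box : (Fin d → ℤ) → Finset (Fin d → ℤ) := fun a =>
    Fintype.piFinset fun i => Finset.Icc (a i - R) (a i + R)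
  have hN : ∀ b, (box b).card ≤ (2 * R + 1).toNat ^ d := by
    intro b
    simp only [box, Fintype.card_piFinset, Int.card_Icc]
    have : ∀ i, b i + R + 1 - (b i - R) = 2 * R + 1 := fun i => by ring
    simp [this]
  have hdiam : ∀ k p, Metric.diam
      ((P.filter (fun x => f k x = f k p) : Finset _) : Set (EuclideanSpace ℝ (Fin d)))
      ≤ d * (2 * L / 2 ^ k) := by
    intro k p
    refine Metric.diam_le_of_forall_dist_le (by positivity) ?_
    intro x hx y hy
    have hx' := (Finset.mem_filter.1 (Finset.mem_coe.1 hx)).2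
    have hy' := (Finset.mem_filter.1 (Finset.mem_coe.1 hy)).2
    exact hdist k x y (hx'.trans hy'.symm)
  have hbox : ∀ k, ∀ p ∈ P, ∀ q ∈ P,
      ¬ Sep (P.filter (fun x => f k x = f k p)) (P.filter (fun x => f k x = f k q)) →
      f (k+1) q ∈ box (f (k+1) p) := by
    intro k p hp q hq hns
    simp only [Sep, not_forall, not_le] at hns
    obtain ⟨a, ha, b, hb, hab⟩ := hns
    have ha' := (Finset.mem_filter.1 ha).2
    have hb' := (Finset.mem_filter.1 hb).2
    set w := 2 * L / 2 ^ k with hw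
    have hwpos : 0 < w := by positivity
    have hab' : dist a b ≤ s * (d * w) :=
      hab.le.trans (mul_le_mul_of_nonneg_left (max_le (hdiam k p) (hdiam k q)) (by linarith))
    refine Fintype.mem_piFinset.2 fun i => ?_
    have c1 := wspdGrid_close d L hL k a p ha' i
    have c2 := wspdGrid_close d L hL k b q hb' i
    have c3 := (wspd_coord_le d a b i).trans hab'
    rw [← hw] at c1 c2
    have c4 : |p i - q i| ≤ (2 * (s * d + 2)) * (2 * L / 2 ^ (k+1)) := by
      have e : (2 * (s * d + 2)) * (2 * L / 2 ^ (k+1)) = (s * d + 2) * w := by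
        rw [hw, pow_succ]; field_simp
      rw [e]
      rw [abs_le] at c1 c2 c3 ⊢
      constructor <;> nlinarith [c1.1, c1.2, c2.1, c2.2, c3.1, c3.2]
    have c5 := wspdGrid_near d L hL (k+1) p q i _ c4
    have c6 : |((wspdGrid d L (k+1) q i : ℝ)) - wspdGrid d L (k+1) p i| ≤ s * (2 * d + 5) := by
      refine c5.trans ?_
      nlinarith
    have c7 : |wspdGrid d L (k+1) q i - wspdGrid d L (k+1) p i| ≤ R := by
      rw [hR, Int.le_floor]
      push_cast
      exact c6
    rw [abs_le] at c7
    rw [Finset.mem_Icc]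
    constructor <;> simp only [hfdef] <;> linarith [c7.1, c7.2]
  obtain ⟨W, hWcard, hWprop, hWuniq⟩ := wspd_comb P f (fun a i => a i / 2)
    (wspdGrid_parent d L) Sep hsymm h0 K hK hmono box _ hN hbox
  let e := W.equivFin
  refine ⟨W.card, fun i => (e.symm i).1.1, fun i => (e.symm i).1.2, ?_, ?_, ?_, ?_⟩
  · have h1 : (W.card : ℝ) ≤ ((2 * R + 1).toNat : ℝ) ^ d * (2 * P.card) := by
      exact_mod_cast hWcard
    have h2 : ((2 * R + 1).toNat : ℝ) ≤ 3 * (2 * d + 5) * s := by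
      have h3 : (((2 * R + 1).toNat : ℤ) : ℝ) = ((2 * R + 1 : ℤ) : ℝ) := by
        rw [Int.toNat_of_nonneg (by omega)]
      rw [Int.cast_natCast] at h3
      rw [h3]
      push_cast
      have := Int.floor_le (s * (2 * d + 5) : ℝ)
      rw [← hR] at this
      linarith
    calc (W.card : ℝ) ≤ ((2 * R + 1).toNat : ℝ) ^ d * (2 * P.card) := h1
      _ ≤ (3 * (2 * d + 5) * s) ^ d * (2 * P.card) := by gcongr
      _ = 2 * (3 * (2 * d + 5)) ^ d * s ^ d * P.card := by rw [mul_pow]; ring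
  · intro i
    obtain ⟨a, b, c, dd, _⟩ := hWprop _ (e.symm i).2
    exact ⟨a, b, c, dd⟩
  · intro i
    exact (hWprop _ (e.symm i).2).2.2.2.2
  · intro p hp q hq hpq
    obtain ⟨w, ⟨hw, hmem⟩, huniq⟩ := hWuniq p hp q hq hpq
    refine ⟨e ⟨w, hw⟩, by simpa using hmem, ?_⟩
    intro j hj
    have := huniq (e.symm j).1 ⟨(e.symm j).2, hj⟩
    rw [← Equiv.symm_apply_eq]
    exact Subtype.ext this
end

section
/- For every integer d ≥ 1 there exists a constant C > 0 such that for every real s ≥ 1 and every finite point set P ⊂ ℝ^d with |P| = n ≥ 2, there exists an s-well-separated pair decomposition (A_1, B_1), …, (A_m, B_m) of P with m ≤ C · s^d · n which additionally satisfies Σ_{i=1}^m min(|A_i|, |B_i|) ≤ C · s^d · n · log n. -/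
namespace WspdAux

open Finset

variable {α : Type*} {d : ℕ}

/-- The label of the dyadic cell of level `i` containing `x`. -/
noncomputable def cell (y : α → Fin d → ℝ) (i : ℕ) (x : α) : Fin d → ℤ :=
  fun k => ⌊(2 : ℝ) ^ i * y x k⌋

/-- Two labels are separated. -/
def Sep (T : ℕ) (a b : Fin d → ℤ) : Prop := ∃ k, (T : ℤ) < |a k - b k|

theorem Sep.symm {T : ℕ} {a b : Fin d → ℤ} (h : Sep T a b) : Sep T b a := by
  obtain ⟨k, hk⟩ := h
  exact ⟨k, by rwa [abs_sub_comm]⟩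

theorem Sep.ne {T : ℕ} {a b : Fin d → ℤ} (h : Sep T a b) : a ≠ b := by
  rintro rfl
  obtain ⟨k, hk⟩ := h
  simp at hk
  omega

theorem cell_half (y : α → Fin d → ℝ) (i : ℕ) (x : α) (k : Fin d) :
    cell y i x k = cell y (i + 1) x k / 2 := by
  unfold cell
  have h1 := Int.floor_le ((2 : ℝ) ^ (i + 1) * y x k)
  have h2 := Int.lt_floor_add_one ((2 : ℝ) ^ (i + 1) * y x k)
  set m := ⌊(2 : ℝ) ^ (i + 1) * y x k⌋ with hm
  have h3 : (2 : ℝ) ^ (i + 1) * y x k = 2 * ((2 : ℝ) ^ i * y x k) := by ring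
  rw [h3] at h1 h2
  rw [Int.floor_eq_iff]
  have h4 : 2 * (m / 2) ≤ m := by omega
  have h5 : m + 1 ≤ 2 * (m / 2) + 2 := by omega
  have h4' : (2 : ℝ) * ((m / 2 : ℤ) : ℝ) ≤ m := by exact_mod_cast h4
  have h5' : (m : ℝ) + 1 ≤ 2 * ((m / 2 : ℤ) : ℝ) + 2 := by exact_mod_cast h5
  constructor <;> linarith

theorem cell_eq_of_le {y : α → Fin d → ℝ} {i j : ℕ} (hij : j ≤ i) {x z : α}
    (h : cell y i x = cell y i z) : cell y j x = cell y j z := by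
  induction i, hij using Nat.le_induction with
  | base => exact h
  | succ i hi ih =>
    apply ih
    funext k
    rw [cell_half y i x, cell_half y i z, h]

theorem sep_succ {T : ℕ} (hT : 1 ≤ T) {y : α → Fin d → ℝ} {i : ℕ} {x z : α}
    (h : Sep T (cell y i x) (cell y i z)) : Sep T (cell y (i + 1) x) (cell y (i + 1) z) := by
  obtain ⟨k, hk⟩ := h
  refine ⟨k, ?_⟩
  rw [cell_half y i x, cell_half y i z] at hk
  rw [lt_abs] at hk ⊢
  omega

theorem sep_mono {T : ℕ} (hT : 1 ≤ T) {y : α → Fin d → ℝ} {i j : ℕ} (hij : j ≤ i) {x z : α}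
    (h : Sep T (cell y j x) (cell y j z)) : Sep T (cell y i x) (cell y i z) := by
  induction i, hij using Nat.le_induction with
  | base => exact h
  | succ i hi ih => exact sep_succ hT ih

theorem near_succ {T : ℕ} {y : α → Fin d → ℝ} {i : ℕ} {x z : α}
    (h : ¬ Sep T (cell y i x) (cell y i z)) (k : Fin d) :
    |cell y (i + 1) x k - cell y (i + 1) z k| ≤ 2 * T + 1 := by
  unfold Sep at h
  push Not at h
  have := h k
  rw [cell_half y i x, cell_half y i z] at this
  rw [abs_le] at this ⊢
  omega

/-- `i + 1` is the first level at which `p` and `q` are separated. -/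
def IsLev (T : ℕ) (y : α → Fin d → ℝ) (i : ℕ) (p q : α) : Prop :=
  Sep T (cell y (i + 1) p) (cell y (i + 1) q) ∧ ¬ Sep T (cell y i p) (cell y i q)

theorem IsLev.symm {T : ℕ} {y : α → Fin d → ℝ} {i : ℕ} {p q : α} (h : IsLev T y i p q) :
    IsLev T y i q p := ⟨h.1.symm, fun h' => h.2 h'.symm⟩

theorem IsLev.congr {T : ℕ} {y : α → Fin d → ℝ} {i : ℕ} {p q p' q' : α} (h : IsLev T y i p q)
    (hp : cell y (i + 1) p' = cell y (i + 1) p) (hq : cell y (i + 1) q' = cell y (i + 1) q) :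
    IsLev T y i p' q' := by
  unfold IsLev
  rw [hp, hq, cell_eq_of_le (Nat.le_succ i) hp, cell_eq_of_le (Nat.le_succ i) hq]
  exact h

theorem IsLev.unique {T : ℕ} (hT : 1 ≤ T) {y : α → Fin d → ℝ} {i j : ℕ} {p q : α}
    (h : IsLev T y i p q) (h' : IsLev T y j p q) : i = j := by
  rcases lt_trichotomy i j with hlt | heq | hgt
  · exact absurd (sep_mono hT hlt h.1) h'.2
  · exact heq
  · exact absurd (sep_mono hT hgt h'.1) h.2

theorem cell_zero {y : α → Fin d → ℝ} {x : α} (hx : ∀ k, 0 ≤ y x k ∧ y x k < 1) :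
    cell y 0 x = 0 := by
  funext k
  simp only [cell, pow_zero, one_mul, Pi.zero_apply]
  rw [Int.floor_eq_zero_iff]
  exact hx k

theorem exists_lev (T : ℕ) {y : α → Fin d → ℝ} {p q : α}
    (hp : ∀ k, 0 ≤ y p k ∧ y p k < 1) (hq : ∀ k, 0 ≤ y q k ∧ y q k < 1) (hpq : y p ≠ y q) :
    ∃ i, IsLev T y i p q := by
  classical
  have hex : ∃ i, Sep T (cell y i p) (cell y i q) := by
    obtain ⟨k, hk⟩ := Function.ne_iff.mp hpq
    have hpos : 0 < |y p k - y q k| := abs_pos.mpr (sub_ne_zero.mpr hk)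
    obtain ⟨i, hi⟩ := pow_unbounded_of_one_lt (((T : ℝ) + 1) / |y p k - y q k|)
      (by norm_num : (1 : ℝ) < 2)
    refine ⟨i, k, ?_⟩
    rw [div_lt_iff₀ hpos] at hi
    by_contra hcon
    push Not at hcon
    have h1 := Int.floor_le ((2 : ℝ) ^ i * y p k)
    have h2 := Int.lt_floor_add_one ((2 : ℝ) ^ i * y p k)
    have h3 := Int.floor_le ((2 : ℝ) ^ i * y q k)
    have h4 := Int.lt_floor_add_one ((2 : ℝ) ^ i * y q k)
    have h5 : |((cell y i p k : ℤ) : ℝ) - (cell y i q k : ℤ)| ≤ T := by exact_mod_cast hcon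
    rw [abs_le] at h5
    simp only [cell] at h5
    have h6 : (2 : ℝ) ^ i * |y p k - y q k| ≤ T + 1 := by
      rw [← abs_of_pos (by positivity : (0 : ℝ) < 2 ^ i), ← abs_mul, abs_le]
      constructor <;> linarith
    linarith
  have h0 : ¬ Sep T (cell y 0 p) (cell y 0 q) := by
    rw [cell_zero hp, cell_zero hq]
    exact fun h => h.ne rfl
  have hne : Nat.find hex ≠ 0 := by
    intro h
    have := Nat.find_spec hex
    rw [h] at this
    exact h0 this
  obtain ⟨i, hi⟩ := Nat.exists_eq_succ_of_ne_zero hne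
  refine ⟨i, ?_, Nat.find_min hex (by omega)⟩
  have := Nat.find_spec hex
  rwa [hi] at this

/-- The cell of level `j` containing `p` has at least two nonempty children. -/
def Branch (P : Finset α) (y : α → Fin d → ℝ) (j : ℕ) (p : α) : Prop :=
  ∃ z ∈ P, cell y j z = cell y j p ∧ cell y (j + 1) z ≠ cell y (j + 1) p

/-- `x` is the key point of its (branching) cell at level `j`. -/
def Key (P : Finset α) (y : α → Fin d → ℝ) (rk : α → ℕ) (x : α) (j : ℕ) : Prop :=
  (∀ z ∈ P, cell y (j + 1) z = cell y (j + 1) x → rk x ≤ rk z) ∧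
    ∃ z ∈ P, cell y j z = cell y j x ∧ rk z < rk x

theorem Key.not_lt {P : Finset α} {y : α → Fin d → ℝ} {rk : α → ℕ} {x : α} {i j : ℕ}
    (h : Key P y rk x i) (h' : Key P y rk x j) : ¬ i < j := by
  intro hlt
  obtain ⟨z, hz, hzc, hzr⟩ := h'.2
  exact absurd (h.1 z hz (cell_eq_of_le hlt hzc)) (by omega)

theorem Key.unique {P : Finset α} {y : α → Fin d → ℝ} {rk : α → ℕ} {x : α} {i j : ℕ}
    (h : Key P y rk x i) (h' : Key P y rk x j) : i = j := by
  have := h.not_lt h'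
  have := h'.not_lt h
  omega

theorem Branch.exists_key {P : Finset α} {y : α → Fin d → ℝ} {rk : α → ℕ}
    (hrk : Set.InjOn rk P) {j : ℕ} {p : α} (hp : p ∈ P) (h : Branch P y j p) :
    ∃ x ∈ P, Key P y rk x j ∧ cell y j x = cell y j p := by
  classical
  obtain ⟨z, hz, hzc, hzn⟩ := h
  have hmin : ∀ u ∈ P, ∃ x ∈ P, cell y (j + 1) x = cell y (j + 1) u ∧
      ∀ w ∈ P, cell y (j + 1) w = cell y (j + 1) u → rk x ≤ rk w := by
    intro u hu
    obtain ⟨x, hx, hxm⟩ := Finset.exists_min_image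
      (P.filter fun w => cell y (j + 1) w = cell y (j + 1) u) rk ⟨u, by simp [hu]⟩
    simp only [Finset.mem_filter] at hx hxm
    exact ⟨x, hx.1, hx.2, fun w hw hwc => hxm w ⟨hw, hwc⟩⟩
  obtain ⟨x1, hx1, hc1, hm1⟩ := hmin p hp
  obtain ⟨x2, hx2, hc2, hm2⟩ := hmin z hz
  have hd1 := cell_eq_of_le (Nat.le_succ j) hc1
  have hd2 := (cell_eq_of_le (Nat.le_succ j) hc2).trans hzc
  have hne : rk x1 ≠ rk x2 := by
    intro h
    have := hrk hx1 hx2 h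
    subst this
    exact hzn (hc2.symm.trans hc1)
  rcases lt_or_gt_of_ne hne with h | h
  · exact ⟨x2, hx2, ⟨fun w hw hwc => hm2 w hw (hwc.trans hc2), x1, hx1, hd1.trans hd2.symm, h⟩, hd2⟩
  · exact ⟨x1, hx1, ⟨fun w hw hwc => hm1 w hw (hwc.trans hc1), x2, hx2, hd2.trans hd1.symm, h⟩, hd1⟩

theorem unary_down {P : Finset α} {y : α → Fin d → ℝ} {i j : ℕ} {p : α} (hij : j ≤ i)
    (h : ∀ l, j ≤ l → l < i → ¬ Branch P y l p) {z : α} (hz : z ∈ P)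
    (hc : cell y j z = cell y j p) : cell y i z = cell y i p := by
  induction i, hij using Nat.le_induction with
  | base => exact hc
  | succ i hi ih =>
    have h1 := ih (fun l h1 h2 => h l h1 (by omega))
    by_contra hcon
    exact h i hi (by omega) ⟨z, hz, h1, hcon⟩

/-- Between level `j + 1` and level `i + 1` the cell of `p` does not change. -/
def Unary (P : Finset α) (y : α → Fin d → ℝ) (j i : ℕ) (p : α) : Prop :=
  ∀ z ∈ P, cell y (j + 1) z = cell y (j + 1) p → cell y (i + 1) z = cell y (i + 1) p

theorem exists_branch {P : Finset α} {y : α → Fin d → ℝ}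
    (hy : ∀ x ∈ P, ∀ k, 0 ≤ y x k ∧ y x k < 1) {p q : α} (hp : p ∈ P) (hq : q ∈ P) {i : ℕ}
    (hne : cell y (i + 1) p ≠ cell y (i + 1) q) :
    ∃ j ≤ i, (Branch P y j p ∨ Branch P y j q) ∧ Unary P y j i p ∧ Unary P y j i q := by
  classical
  have hex : ∃ j, j ≤ i ∧ (Branch P y j p ∨ Branch P y j q) := by
    have hex : ∃ j, cell y j p ≠ cell y j q := ⟨_, hne⟩
    have h0 : Nat.find hex ≠ 0 := by
      intro h
      have := Nat.find_spec hex
      rw [h, cell_zero (hy p hp), cell_zero (hy q hq)] at this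
      exact this rfl
    obtain ⟨j, hj⟩ := Nat.exists_eq_succ_of_ne_zero h0
    have h1 := Nat.find_spec hex
    have h2 := Nat.find_min hex (m := j) (by omega)
    have h3 := Nat.find_min' hex hne
    rw [hj] at h1
    push Not at h2
    exact ⟨j, by omega, Or.inl ⟨q, hq, h2.symm, h1.symm⟩⟩
  obtain ⟨j0, hj0, hb0⟩ := hex
  set Q : ℕ → Prop := fun j => Branch P y j p ∨ Branch P y j q with hQ
  have hspec : Q (Nat.findGreatest Q i) := Nat.findGreatest_spec hj0 hb0
  have hle : Nat.findGreatest Q i ≤ i := Nat.findGreatest_le i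
  have hnot : ∀ l, Nat.findGreatest Q i + 1 ≤ l → l < i + 1 → ¬ Q l := fun l h1 h2 =>
    Nat.findGreatest_is_greatest (n := i) (by omega) (by omega)
  refine ⟨_, hle, hspec, ?_, ?_⟩
  · intro z hz hc
    exact unary_down (by omega) (fun l h1 h2 h3 => hnot l h1 h2 (Or.inl h3)) hz hc
  · intro z hz hc
    exact unary_down (by omega) (fun l h1 h2 h3 => hnot l h1 h2 (Or.inr h3)) hz hc

/-- The index set generators. -/
def Gen (T : ℕ) (P : Finset α) (y : α → Fin d → ℝ) (t : ℕ × (Fin d → ℤ) × (Fin d → ℤ))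
    (p q : α) : Prop :=
  p ∈ P ∧ q ∈ P ∧ IsLev T y t.1 p q ∧ t.2.1 = cell y (t.1 + 1) p ∧ t.2.2 = cell y (t.1 + 1) q

/-- The charging relation, first role. -/
def Chg (P : Finset α) (y : α → Fin d → ℝ) (rk : α → ℕ) (i : ℕ) (p q : α)
    (x : α) (par off : Fin d → ℤ) : Prop :=
  ∃ j, Unary P y j i p ∧ Unary P y j i q ∧ Key P y rk x j ∧ cell y j x = cell y j p ∧
    (par = fun k => cell y (j + 1) p k % 2) ∧
    (off = fun k => cell y (j + 1) q k - cell y (j + 1) p k)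

theorem Chg.eq {T : ℕ} (hT : 1 ≤ T) {P : Finset α} {y : α → Fin d → ℝ} {rk : α → ℕ}
    {i i' : ℕ} {p q p' q' : α} (hp' : p' ∈ P) (hq' : q' ∈ P)
    (hl : IsLev T y i p q) (hl' : IsLev T y i' p' q')
    {x : α} {par off : Fin d → ℤ} (h : Chg P y rk i p q x par off)
    (h' : Chg P y rk i' p' q' x par off) :
    i = i' ∧ cell y (i + 1) p = cell y (i + 1) p' ∧ cell y (i + 1) q = cell y (i + 1) q' := by
  obtain ⟨j, hu, hv, hk, hc, hpar, hoff⟩ := h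
  obtain ⟨j', hu', hv', hk', hc', hpar', hoff'⟩ := h'
  obtain rfl := hk.unique hk'
  have hpp : cell y (j + 1) p' = cell y (j + 1) p := by
    funext k
    have h1 : cell y j p' k = cell y j p k := by rw [← hc', hc]
    rw [cell_half y j p', cell_half y j p] at h1
    have h2 := congrFun (hpar'.symm.trans hpar) k
    omega
  have hqq : cell y (j + 1) q' = cell y (j + 1) q := by
    funext k
    have h2 := congrFun (hoff'.symm.trans hoff) k
    rw [hpp] at h2
    omega
  have e1 := hu p' hp' hpp
  have e2 := hv q' hq' hqq
  exact ⟨(hl.congr e1 e2).unique hT hl', e1.symm, e2.symm⟩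

theorem card_box (d n : ℕ) (a b : ℤ) (h : (b + 1 - a).toNat = n) :
    (Fintype.piFinset (fun _ : Fin d => Finset.Icc a b)).card = n ^ d := by
  simp [Fintype.card_piFinset, h]

theorem card_index_le {T : ℕ} (hT : 1 ≤ T) (P : Finset α) (y : α → Fin d → ℝ)
    (hy : ∀ x ∈ P, ∀ k, 0 ≤ y x k ∧ y x k < 1)
    (I : Finset (ℕ × (Fin d → ℤ) × (Fin d → ℤ))) (hI : ∀ t ∈ I, ∃ p q, Gen T P y t p q) :
    I.card ≤ P.card * (2 * (2 ^ d * (4 * T + 3) ^ d)) := by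
  classical
  obtain ⟨rk, hrk⟩ := Set.countable_iff_exists_injOn.mp P.countable_toSet
  set code : Finset (α × Bool × (Fin d → ℤ) × (Fin d → ℤ)) :=
    P ×ˢ (Finset.univ ×ˢ ((Fintype.piFinset (fun _ : Fin d => Finset.Icc (0 : ℤ) 1)) ×ˢ
      (Fintype.piFinset (fun _ : Fin d => Finset.Icc (-(2 * T + 1) : ℤ) (2 * T + 1))))) with hcode
  have hcard : code.card = P.card * (2 * (2 ^ d * (4 * T + 3) ^ d)) := by
    rw [hcode, Finset.card_product, Finset.card_product, Finset.card_product,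
      card_box d 2 _ _ (by rfl), card_box d (4 * T + 3) _ _ (by omega)]
    simp
  rw [← hcard]
  apply Finset.card_le_card_of_forall_subsingleton
    (fun t c => ∃ p q, Gen T P y t p q ∧
      (if c.2.1 then Chg P y rk t.1 p q c.1 c.2.2.1 c.2.2.2
        else Chg P y rk t.1 q p c.1 c.2.2.1 c.2.2.2))
  · intro t ht
    obtain ⟨p, q, hg⟩ := hI t ht
    obtain ⟨hp, hq, hl, h1, h2⟩ := hg
    obtain ⟨j, hji, hb, hu, hv⟩ := exists_branch hy hp hq hl.1.ne
    have hns : ¬ Sep T (cell y j p) (cell y j q) := fun h => hl.2 (sep_mono hT hji h)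
    rcases hb with hb | hb
    · obtain ⟨x, hx, hk, hxc⟩ := hb.exists_key hrk hp
      refine ⟨(x, true, (fun k => cell y (j + 1) p k % 2),
        (fun k => cell y (j + 1) q k - cell y (j + 1) p k)), ?_, p, q, ⟨hp, hq, hl, h1, h2⟩, ?_⟩
      rotate_left
      · simp only [if_true]
        exact ⟨j, hu, hv, hk, hxc, rfl, rfl⟩
      · simp only [hcode, Finset.mem_product, hx, Finset.mem_univ, Fintype.mem_piFinset,
          Finset.mem_Icc, true_and]
        refine ⟨fun k => by omega, fun k => ?_⟩
        have := near_succ hns k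
        rw [abs_le] at this
        omega
    · obtain ⟨x, hx, hk, hxc⟩ := hb.exists_key hrk hq
      refine ⟨(x, false, (fun k => cell y (j + 1) q k % 2),
        (fun k => cell y (j + 1) p k - cell y (j + 1) q k)), ?_, p, q, ⟨hp, hq, hl, h1, h2⟩, ?_⟩
      rotate_left
      · simp only [Bool.false_eq_true, if_false]
        exact ⟨j, hv, hu, hk, hxc, rfl, rfl⟩
      · simp only [hcode, Finset.mem_product, hx, Finset.mem_univ, Fintype.mem_piFinset,
          Finset.mem_Icc, true_and]
        refine ⟨fun k => by omega, fun k => ?_⟩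
        have := near_succ hns k
        rw [abs_le] at this
        omega
  · rintro ⟨x, role, par, off⟩ - ⟨i, a, b⟩ ⟨-, p, q, ⟨hp, hq, hl, h1, h2⟩, hc⟩ ⟨i', a', b'⟩
      ⟨-, p', q', ⟨hp', hq', hl', h1', h2'⟩, hc'⟩
    simp only at *
    cases role
    · simp only [Bool.false_eq_true, if_false] at hc hc'
      obtain ⟨rfl, e1, e2⟩ := hc.eq hT hq' hp' hl.symm hl'.symm hc'
      rw [h1, h2, h1', h2', e1, e2]
    · simp only [if_true] at hc hc'
      obtain ⟨rfl, e1, e2⟩ := hc.eq hT hp' hq' hl hl' hc'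
      rw [h1, h2, h1', h2', e1, e2]

end WspdAux

namespace WspdAux

open Finset

variable {α : Type*} {d : ℕ}

open Classical in
/-- The number of points of `P` near `p` at scale `i`. -/
noncomputable def cnt (T : ℕ) (P : Finset α) (y : α → Fin d → ℝ) (i : ℕ) (p : α) : ℕ :=
  (P.filter fun x => ∀ k, |y x k - y p k| * 2 ^ i < 8 * T).card

/-- `p` is bad at scale `i`. -/
def Bad (T : ℕ) (P : Finset α) (y : α → Fin d → ℝ) (i : ℕ) (p : α) : Prop :=
  2 * cnt T P y (i + 4) p ≤ cnt T P y i p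

theorem cnt_anti (T : ℕ) (P : Finset α) (y : α → Fin d → ℝ) {i j : ℕ} (hij : i ≤ j) (p : α) :
    cnt T P y j p ≤ cnt T P y i p := by
  classical
  apply Finset.card_le_card
  intro x hx
  simp only [Finset.mem_filter] at hx ⊢
  refine ⟨hx.1, fun k => lt_of_le_of_lt ?_ (hx.2 k)⟩
  have : (2 : ℝ) ^ i ≤ 2 ^ j := pow_le_pow_right₀ (by norm_num) hij
  exact mul_le_mul_of_nonneg_left this (abs_nonneg _)

theorem cnt_pos {T : ℕ} (hT : 1 ≤ T) {P : Finset α} (y : α → Fin d → ℝ) (i : ℕ) {p : α}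
    (hp : p ∈ P) : 1 ≤ cnt T P y i p := by
  classical
  apply Finset.card_pos.mpr
  refine ⟨p, ?_⟩
  simp only [Finset.mem_filter, sub_self, abs_zero, zero_mul]
  exact ⟨hp, fun _ => by positivity⟩

theorem cnt_le (T : ℕ) (P : Finset α) (y : α → Fin d → ℝ) (i : ℕ) (p : α) :
    cnt T P y i p ≤ P.card := Finset.card_filter_le _ _

theorem abs_floor_bound (u v r : ℝ) (hr : 0 < r) :
    |(u - v) * r - ((⌊r * u⌋ : ℝ) - ⌊r * v⌋)| < 1 := by
  have h1 := Int.floor_le (r * u)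
  have h2 := Int.lt_floor_add_one (r * u)
  have h3 := Int.floor_le (r * v)
  have h4 := Int.lt_floor_add_one (r * v)
  rw [abs_lt]
  constructor <;> linarith

theorem near_real {T : ℕ} {y : α → Fin d → ℝ} {i : ℕ} {p q : α}
    (h : ¬ Sep T (cell y i p) (cell y i q)) (k : Fin d) :
    |y p k - y q k| * 2 ^ (i + 1) < 2 * T + 2 := by
  have h1 := near_succ h k
  have hr : (0 : ℝ) < 2 ^ (i + 1) := by positivity
  have h2 := abs_floor_bound (y p k) (y q k) _ hr
  have h3 : |((cell y (i + 1) p k : ℤ) : ℝ) - (cell y (i + 1) q k : ℤ)| ≤ 2 * T + 1 := by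
    exact_mod_cast h1
  simp only [cell] at h3
  have h4 : |y p k - y q k| * 2 ^ (i + 1) = |(y p k - y q k) * 2 ^ (i + 1)| := by
    rw [abs_mul, abs_of_pos hr]
  rw [h4]
  rw [abs_lt] at h2 ⊢
  rw [abs_le] at h3
  constructor <;> linarith

theorem far_real {T : ℕ} {y : α → Fin d → ℝ} {i : ℕ} {p q : α}
    (h : Sep T (cell y i p) (cell y i q)) :
    ∃ k, (T : ℝ) < |y p k - y q k| * 2 ^ i := by
  obtain ⟨k, hk⟩ := h
  refine ⟨k, ?_⟩
  have hr : (0 : ℝ) < 2 ^ i := by positivity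
  have h2 := abs_floor_bound (y p k) (y q k) _ hr
  have h3 : (T : ℝ) + 1 ≤ |((cell y i p k : ℤ) : ℝ) - (cell y i q k : ℤ)| := by
    exact_mod_cast hk
  simp only [cell] at h3
  have h4 : |y p k - y q k| * 2 ^ i = |(y p k - y q k) * 2 ^ i| := by
    rw [abs_mul, abs_of_pos hr]
  rw [h4]
  rw [abs_lt] at h2
  rw [lt_abs]
  rw [le_abs] at h3
  rcases h3 with h3 | h3
  · left; linarith
  · right; linarith

theorem same_real {y : α → Fin d → ℝ} {i : ℕ} {p q : α}
    (h : cell y i p = cell y i q) (k : Fin d) :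
    |y p k - y q k| * 2 ^ i ≤ 1 := by
  have hr : (0 : ℝ) < 2 ^ i := by positivity
  have h2 := abs_floor_bound (y p k) (y q k) _ hr
  have h3 := congrFun h k
  simp only [cell] at h3
  rw [h3, sub_self, sub_zero, abs_mul, abs_of_pos hr] at h2
  exact h2.le

theorem bad_or_bad {T : ℕ} (hT : 1 ≤ T) {P : Finset α} {y : α → Fin d → ℝ} {i : ℕ} {p q : α}
    (h : IsLev T y i p q) : Bad T P y (i + 1) p ∨ Bad T P y (i + 1) q := by
  classical
  have hT' : (1 : ℝ) ≤ T := by exact_mod_cast hT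
  have key : ∀ u v, IsLev T y i u v →
      cnt T P y (i + 1 + 4) u + cnt T P y (i + 1 + 4) v ≤ cnt T P y (i + 1) u := by
    intro u v h
    unfold cnt
    rw [← Finset.card_union_of_disjoint]
    · apply Finset.card_le_card
      intro x hx
      simp only [Finset.mem_union, Finset.mem_filter] at hx ⊢
      rcases hx with ⟨hx, h1⟩ | ⟨hx, h1⟩
      · refine ⟨hx, fun k => ?_⟩
        have h2 := h1 k
        rw [pow_add _ (i + 1)] at h2
        have : 0 ≤ |y x k - y u k| * 2 ^ (i + 1) := by positivity
        linarith
      · refine ⟨hx, fun k => ?_⟩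
        have h2 := h1 k
        have h3 := near_real h.2 k
        have h4 : |y x k - y u k| ≤ |y x k - y v k| + |y u k - y v k| := by
          rw [abs_sub_comm (y u k)]
          exact abs_sub_le _ _ _
        have h5 := mul_le_mul_of_nonneg_right h4 (by positivity : (0 : ℝ) ≤ 2 ^ (i + 1))
        rw [pow_add _ (i + 1)] at h2
        linarith
    · rw [Finset.disjoint_left]
      intro x hx hx'
      simp only [Finset.mem_filter] at hx hx'
      obtain ⟨k, hk⟩ := far_real h.1
      have h1 := hx.2 k
      have h2 := hx'.2 k
      have h4 : |y u k - y v k| ≤ |y x k - y u k| + |y x k - y v k| := by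
        rw [abs_sub_comm (y x k) (y u k)]
        exact abs_sub_le _ _ _
      have h5 := mul_le_mul_of_nonneg_right h4 (by positivity : (0 : ℝ) ≤ 2 ^ (i + 1))
      rw [pow_add _ (i + 1)] at h1 h2
      linarith
  have h1 := key p q h
  have h2 := key q p h.symm
  unfold Bad
  omega

theorem card_bad {T : ℕ} (hT : 1 ≤ T) {P : Finset α} {y : α → Fin d → ℝ} {p : α} (hp : p ∈ P)
    (S : Finset ℕ) (hS : ∀ i ∈ S, Bad T P y (i + 1) p) :
    (S.card : ℝ) * Real.log 2 ≤ 4 * Real.log P.card := by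
  set g : ℕ → ℝ := fun i => Real.log (cnt T P y (i + 1) p) with hg
  have hpos : ∀ i, (1 : ℝ) ≤ cnt T P y i p := fun i => by exact_mod_cast cnt_pos hT y i hp
  have hg0 : ∀ i, 0 ≤ g i := fun i => Real.log_nonneg (hpos _)
  have hgn : ∀ i, g i ≤ Real.log P.card := fun i =>
    Real.log_le_log (by linarith [hpos (i + 1)]) (by exact_mod_cast cnt_le T P y (i + 1) p)
  have hmono : ∀ i, 0 ≤ g i - g (i + 4) := fun i => by
    rw [sub_nonneg]
    exact Real.log_le_log (by linarith [hpos (i + 4 + 1)])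
      (by exact_mod_cast cnt_anti T P y (by omega) p)
  have htel : ∀ N, ∑ i ∈ range N, (g i - g (i + 4)) =
      (g 0 + g 1 + g 2 + g 3) - (g N + g (N + 1) + g (N + 2) + g (N + 3)) := by
    intro N
    induction N with
    | zero => simp
    | succ N ih =>
      rw [Finset.sum_range_succ, ih]
      have e1 : N + 1 + 1 = N + 2 := by ring
      have e2 : N + 1 + 2 = N + 3 := by ring
      have e3 : N + 1 + 3 = N + 4 := by ring
      rw [e1, e2, e3]
      ring
  obtain ⟨N, hN⟩ := Finset.exists_nat_subset_range S
  calc (S.card : ℝ) * Real.log 2 = ∑ i ∈ S, Real.log 2 := by simp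
    _ ≤ ∑ i ∈ S, (g i - g (i + 4)) := by
      apply Finset.sum_le_sum
      intro i hi
      have h1 : (2 : ℝ) * cnt T P y (i + 1 + 4) p ≤ cnt T P y (i + 1) p := by
        exact_mod_cast hS i hi
      have h2 := hpos (i + 1 + 4)
      have h3 := Real.log_le_log (by linarith) h1
      rw [Real.log_mul (by norm_num) (by linarith)] at h3
      have e : i + 4 + 1 = i + 1 + 4 := by ring
      simp only [hg]
      rw [e]
      linarith
    _ ≤ ∑ i ∈ range N, (g i - g (i + 4)) :=
      Finset.sum_le_sum_of_subset_of_nonneg hN fun i _ _ => hmono i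
    _ ≤ 4 * Real.log P.card := by
      rw [htel]
      linarith [hgn 0, hgn 1, hgn 2, hgn 3, hg0 N, hg0 (N + 1), hg0 (N + 2), hg0 (N + 3)]

open Classical in
/-- The points of `P` in a cell. -/
noncomputable def pts (P : Finset α) (y : α → Fin d → ℝ) (i : ℕ) (a : Fin d → ℤ) : Finset α :=
  P.filter fun x => cell y i x = a

theorem mem_pts {P : Finset α} {y : α → Fin d → ℝ} {i : ℕ} {a : Fin d → ℤ} {x : α} :
    x ∈ pts P y i a ↔ x ∈ P ∧ cell y i x = a := by
  classical
  simp [pts]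

theorem min_sum_le {T : ℕ} (hT : 1 ≤ T) (P : Finset α) (y : α → Fin d → ℝ)
    (I : Finset (ℕ × (Fin d → ℤ) × (Fin d → ℤ))) (hI : ∀ t ∈ I, ∃ p q, Gen T P y t p q) :
    (∑ t ∈ I, (min (pts P y (t.1 + 1) t.2.1).card (pts P y (t.1 + 1) t.2.2).card : ℝ)) ≤
      P.card * (4 * Real.log P.card / Real.log 2 * (2 * (4 * T + 3) ^ d)) := by
  classical
  set R : ℕ × (Fin d → ℤ) × (Fin d → ℤ) → α → Prop := fun t p =>
    (p ∈ pts P y (t.1 + 1) t.2.1 ∨ p ∈ pts P y (t.1 + 1) t.2.2) ∧ Bad T P y (t.1 + 1) p with hR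
  have h1 : ∀ t ∈ I, min (pts P y (t.1 + 1) t.2.1).card (pts P y (t.1 + 1) t.2.2).card ≤
      (P.bipartiteAbove R t).card := by
    intro t ht
    obtain ⟨p0, q0, hp0, hq0, hl, ha, hb⟩ := hI t ht
    by_cases hA : ∀ p ∈ pts P y (t.1 + 1) t.2.1, Bad T P y (t.1 + 1) p
    · refine (min_le_left _ _).trans (Finset.card_le_card fun p hp => ?_)
      rw [Finset.mem_bipartiteAbove]
      exact ⟨(mem_pts.mp hp).1, Or.inl hp, hA p hp⟩
    · push Not at hA
      obtain ⟨p, hp, hpb⟩ := hA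
      refine (min_le_right _ _).trans (Finset.card_le_card fun q hq => ?_)
      rw [Finset.mem_bipartiteAbove]
      refine ⟨(mem_pts.mp hq).1, Or.inr hq, ?_⟩
      have hl' : IsLev T y t.1 p q :=
        hl.congr ((mem_pts.mp hp).2.trans ha) ((mem_pts.mp hq).2.trans hb)
      exact (bad_or_bad hT hl').resolve_left hpb
  have h2 : ∀ p ∈ P, ((I.bipartiteBelow R p).card : ℝ) ≤
      4 * Real.log P.card / Real.log 2 * (2 * (4 * T + 3) ^ d) := by
    intro p hp
    set S : Finset ℕ := (I.image Prod.fst).filter fun i => Bad T P y (i + 1) p with hS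
    have hScard := card_bad hT hp S (fun i hi => (Finset.mem_filter.mp hi).2)
    set box := Fintype.piFinset (fun _ : Fin d => Finset.Icc (-(2 * T + 1) : ℤ) (2 * T + 1))
      with hbox
    have hsub : I.bipartiteBelow R p ⊆ (S ×ˢ ((Finset.univ : Finset Bool) ×ˢ box)).image
        (fun c => if c.2.1 then (c.1, cell y (c.1 + 1) p, cell y (c.1 + 1) p + c.2.2)
          else (c.1, cell y (c.1 + 1) p + c.2.2, cell y (c.1 + 1) p)) := by
      rintro ⟨i, a, b⟩ ht
      rw [Finset.mem_bipartiteBelow] at ht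
      obtain ⟨htI, hmem, hbad⟩ := ht
      simp only at hmem hbad
      obtain ⟨p0, q0, hp0, hq0, hl, ha, hb⟩ := hI _ htI
      simp only at hl ha hb
      have hiS : i ∈ S := by
        rw [hS, Finset.mem_filter]
        exact ⟨Finset.mem_image.mpr ⟨_, htI, rfl⟩, hbad⟩
      have hnear : ∀ k, |a k - b k| ≤ 2 * T + 1 := by
        intro k
        rw [ha, hb]
        exact near_succ hl.2 k
      rw [Finset.mem_image]
      rcases hmem with hm | hm
      · refine ⟨(i, true, b - a), ?_, ?_⟩
        · simp only [Finset.mem_product, hiS, Finset.mem_univ, true_and, hbox,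
            Fintype.mem_piFinset, Finset.mem_Icc, Pi.sub_apply]
          intro k
          have := hnear k
          rw [abs_le] at this
          omega
        · simp [(mem_pts.mp hm).2]
      · refine ⟨(i, false, a - b), ?_, ?_⟩
        · simp only [Finset.mem_product, hiS, Finset.mem_univ, true_and, hbox,
            Fintype.mem_piFinset, Finset.mem_Icc, Pi.sub_apply]
          intro k
          have := hnear k
          rw [abs_le] at this
          omega
        · simp [(mem_pts.mp hm).2]
    have hc := (Finset.card_le_card hsub).trans Finset.card_image_le
    rw [Finset.card_product, Finset.card_product, card_box d (4 * T + 3) _ _ (by omega)] at hc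
    have hlog : 0 < Real.log 2 := Real.log_pos (by norm_num)
    have hc' : ((I.bipartiteBelow R p).card : ℝ) ≤ S.card * (2 * (4 * T + 3) ^ d) := by
      have : (I.bipartiteBelow R p).card ≤ S.card * (2 * (4 * T + 3) ^ d) := by simpa using hc
      exact_mod_cast this
    refine hc'.trans (mul_le_mul_of_nonneg_right ?_ (by positivity))
    rwa [le_div_iff₀ hlog]
  calc (∑ t ∈ I, (min (pts P y (t.1 + 1) t.2.1).card (pts P y (t.1 + 1) t.2.2).card : ℝ))
      ≤ ∑ t ∈ I, ((P.bipartiteAbove R t).card : ℝ) :=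
        Finset.sum_le_sum fun t ht => by exact_mod_cast h1 t ht
    _ = ∑ p ∈ P, ((I.bipartiteBelow R p).card : ℝ) := by
      exact_mod_cast Finset.sum_card_bipartiteAbove_eq_sum_card_bipartiteBelow R
    _ ≤ ∑ p ∈ P, 4 * Real.log P.card / Real.log 2 * (2 * (4 * T + 3) ^ d) := Finset.sum_le_sum h2
    _ = _ := by rw [Finset.sum_const, nsmul_eq_mul]

/-- The combinatorial decomposition. -/
theorem exists_index {T : ℕ} (hT : 1 ≤ T) (P : Finset α) (y : α → Fin d → ℝ)
    (hy : ∀ x ∈ P, ∀ k, 0 ≤ y x k ∧ y x k < 1) (hinj : Set.InjOn y P) :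
    ∃ I : Finset (ℕ × (Fin d → ℤ) × (Fin d → ℤ)), (∀ t ∈ I, ∃ p q, Gen T P y t p q) ∧
      ∀ p ∈ P, ∀ q ∈ P, p ≠ q → ∃! t, t ∈ I ∧
        ((p ∈ pts P y (t.1 + 1) t.2.1 ∧ q ∈ pts P y (t.1 + 1) t.2.2) ∨
          (q ∈ pts P y (t.1 + 1) t.2.1 ∧ p ∈ pts P y (t.1 + 1) t.2.2)) := by
  classical
  have hlev : ∀ p q : α, ∃ i, p ∈ P → q ∈ P → p ≠ q → IsLev T y i p q := by
    intro p q
    by_cases h : p ∈ P ∧ q ∈ P ∧ p ≠ q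
    · obtain ⟨i, hi⟩ := exists_lev T (hy p h.1) (hy q h.2.1) (fun e => h.2.2 (hinj h.1 h.2.1 e))
      exact ⟨i, fun _ _ _ => hi⟩
    · exact ⟨0, fun h1 h2 h3 => absurd ⟨h1, h2, h3⟩ h⟩
  choose lev hlev using hlev
  set e : (Fin d → ℤ) → ℕ := Encodable.encode with he
  have heinj : Function.Injective e := Encodable.encode_injective
  set I : Finset (ℕ × (Fin d → ℤ) × (Fin d → ℤ)) :=
    ((P ×ˢ P).filter fun c => c.1 ≠ c.2 ∧
      e (cell y (lev c.1 c.2 + 1) c.1) < e (cell y (lev c.1 c.2 + 1) c.2)).image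
      fun c => (lev c.1 c.2, cell y (lev c.1 c.2 + 1) c.1, cell y (lev c.1 c.2 + 1) c.2) with hI
  have hmem : ∀ i a b, (i, a, b) ∈ I ↔
      e a < e b ∧ ∃ p q, Gen T P y (i, a, b) p q := by
    intro i a b
    simp only [hI, Finset.mem_image, Finset.mem_filter, Finset.mem_product, Prod.exists,
      Prod.mk.injEq]
    constructor
    · rintro ⟨p, q, ⟨⟨hp, hq⟩, hne, hlt⟩, rfl, rfl, rfl⟩
      exact ⟨hlt, p, q, hp, hq, hlev p q hp hq hne, rfl, rfl⟩
    · rintro ⟨hlt, p, q, hp, hq, hl, ha, hb⟩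
      simp only at hl ha hb
      have hne : p ≠ q := by
        rintro rfl
        exact hl.1.ne rfl
      have := (hlev p q hp hq hne).unique hT hl
      refine ⟨p, q, ⟨⟨hp, hq⟩, hne, ?_⟩, this, ?_, ?_⟩
      · rw [this, ← ha, ← hb]; exact hlt
      · rw [this, ← ha]
      · rw [this, ← hb]
  refine ⟨I, fun ⟨i, a, b⟩ ht => ((hmem i a b).mp ht).2, ?_⟩
  intro p hp q hq hne
  have hl := hlev p q hp hq hne
  set i := lev p q
  have hcne : e (cell y (i + 1) p) ≠ e (cell y (i + 1) q) := fun h => hl.1.ne (heinj h)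
  -- any index covering the pair has level `i` and is oriented by `e`
  have huniq : ∀ u v, u ∈ P → v ∈ P → IsLev T y i u v → ∀ i' a b, (i', a, b) ∈ I →
      u ∈ pts P y (i' + 1) a → v ∈ pts P y (i' + 1) b →
      e (cell y (i + 1) u) < e (cell y (i + 1) v) ∧
      (i', a, b) = (i, cell y (i + 1) u, cell y (i + 1) v) := by
    intro u v hu hv hluv i' a b ht hua hvb
    obtain ⟨hlt, p0, q0, hp0, hq0, hl0, ha, hb⟩ := (hmem i' a b).mp ht
    simp only at hl0 ha hb
    have h1 := (mem_pts.mp hua).2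
    have h2 := (mem_pts.mp hvb).2
    have := (hl0.congr (h1.trans ha) (h2.trans hb)).unique hT hluv
    subst this
    rw [h1, h2]
    exact ⟨hlt, rfl⟩
  rcases lt_or_gt_of_ne hcne with hlt | hlt
  · refine ⟨(i, cell y (i + 1) p, cell y (i + 1) q),
      ⟨(hmem _ _ _).mpr ⟨hlt, p, q, hp, hq, hl, rfl, rfl⟩,
        Or.inl ⟨mem_pts.mpr ⟨hp, rfl⟩, mem_pts.mpr ⟨hq, rfl⟩⟩⟩, ?_⟩
    rintro ⟨i', a, b⟩ ⟨ht, ⟨h1, h2⟩ | ⟨h1, h2⟩⟩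
    · exact (huniq p q hp hq hl i' a b ht h1 h2).2
    · exact absurd (huniq q p hq hp hl.symm i' a b ht h1 h2).1 (by omega)
  · refine ⟨(i, cell y (i + 1) q, cell y (i + 1) p),
      ⟨(hmem _ _ _).mpr ⟨hlt, q, p, hq, hp, hl.symm, rfl, rfl⟩,
        Or.inr ⟨mem_pts.mpr ⟨hq, rfl⟩, mem_pts.mpr ⟨hp, rfl⟩⟩⟩, ?_⟩
    rintro ⟨i', a, b⟩ ⟨ht, ⟨h1, h2⟩ | ⟨h1, h2⟩⟩
    · exact absurd (huniq p q hp hq hl i' a b ht h1 h2).1 (by omega)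
    · exact (huniq q p hq hp hl.symm i' a b ht h1 h2).2

theorem dist_le_of_coord {D : ℝ} (hD : 0 ≤ D) (u v : EuclideanSpace ℝ (Fin d))
    (h : ∀ k, |u k - v k| ≤ D) : dist u v ≤ d * D := by
  rw [EuclideanSpace.dist_eq]
  apply Real.sqrt_le_iff.mpr
  refine ⟨by positivity, ?_⟩
  calc ∑ k, dist (u k) (v k) ^ 2 ≤ ∑ k : Fin d, D ^ 2 := by
        apply Finset.sum_le_sum
        intro k _
        rw [Real.dist_eq]
        exact pow_le_pow_left₀ (abs_nonneg _) (h k) 2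
    _ = d * D ^ 2 := by simp
    _ ≤ (d * D) ^ 2 := by
      have : (d : ℝ) ≤ d ^ 2 := by
        have : d ≤ d ^ 2 := Nat.le_self_pow (by norm_num) d
        exact_mod_cast this
      rw [mul_pow]
      exact mul_le_mul_of_nonneg_right this (by positivity)

theorem coord_le_dist (u v : EuclideanSpace ℝ (Fin d)) (k : Fin d) :
    |u k - v k| ≤ dist u v := by
  rw [dist_eq_norm, ← Real.norm_eq_abs]
  exact PiLp.norm_apply_le (u - v) k

end WspdAux

open WspdAux in
theorem wspd_with_small_min_sum_exists :
    ∀ d : ℕ, 1 ≤ d → ∃ C : ℝ, 0 < C ∧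
      ∀ s : ℝ, 1 ≤ s →
      ∀ P : Finset (EuclideanSpace ℝ (Fin d)), 2 ≤ P.card →
      ∃ (m : ℕ) (A B : Fin m → Finset (EuclideanSpace ℝ (Fin d))),
        (m : ℝ) ≤ C * s ^ d * P.card ∧
        (∀ i, (A i).Nonempty ∧ (B i).Nonempty ∧ A i ⊆ P ∧ B i ⊆ P) ∧
        (∀ i, ∀ a ∈ A i, ∀ b ∈ B i,
          s * max (Metric.diam (A i : Set (EuclideanSpace ℝ (Fin d))))
                  (Metric.diam (B i : Set (EuclideanSpace ℝ (Fin d)))) ≤ dist a b) ∧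
        (∀ p ∈ P, ∀ q ∈ P, p ≠ q →
          ∃! i, (p ∈ A i ∧ q ∈ B i) ∨ (q ∈ A i ∧ p ∈ B i)) ∧
        (∑ i, (min (A i).card (B i).card : ℝ)) ≤
          C * s ^ d * P.card * Real.log P.card := by
  intro d hd
  refine ⟨16 * 2 ^ d * (4 * d + 7) ^ d, by positivity, ?_⟩
  intro s hs P hP
  set T : ℕ := ⌈s * d⌉₊ with hTdef
  have hd1 : (1 : ℝ) ≤ d := by exact_mod_cast hd
  have hsd : s * d ≤ T := Nat.le_ceil _
  have hT : 1 ≤ T := by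
    have : (1 : ℝ) ≤ T := by nlinarith
    exact_mod_cast this
  have hTle : (4 * T + 3 : ℝ) ^ d ≤ (4 * d + 7) ^ d * s ^ d := by
    rw [← mul_pow]
    have : (T : ℝ) < s * d + 1 := Nat.ceil_lt_add_one (by positivity)
    exact pow_le_pow_left₀ (by positivity) (by nlinarith) d
  -- normalisation
  obtain ⟨M, hM0, hM⟩ : ∃ M : ℝ, 0 < M ∧ ∀ x ∈ P, ∀ k, |x k| < M := by
    obtain ⟨M, hM⟩ := P.finite_toSet.isBounded.exists_norm_le
    refine ⟨max M 0 + 1, by positivity, fun x hx k => ?_⟩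
    have h1 := PiLp.norm_apply_le x k
    have h2 := hM x hx
    have h3 := le_max_left M 0
    rw [Real.norm_eq_abs] at h1
    linarith
  set y : EuclideanSpace ℝ (Fin d) → Fin d → ℝ := fun x k => (x k + M) / (2 * M) with hydef
  have hy : ∀ x ∈ P, ∀ k, 0 ≤ y x k ∧ y x k < 1 := by
    intro x hx k
    have := abs_lt.mp (hM x hx k)
    constructor
    · exact div_nonneg (by linarith) (by linarith)
    · simp only [hydef]
      rw [div_lt_one (by linarith)]
      linarith
  have hyd : ∀ u v k, |u k - v k| = 2 * M * |y u k - y v k| := by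
    intro u v k
    have h1 : u k - v k = 2 * M * (y u k - y v k) := by
      simp only [hydef]
      field_simp
      ring
    rw [h1, abs_mul, abs_of_pos (by linarith : 0 < 2 * M)]
  have hinj : Set.InjOn y P := by
    intro u _ v _ huv
    ext k
    have := hyd u v k
    rw [huv, sub_self, abs_zero, mul_zero, abs_eq_zero, sub_eq_zero] at this
    exact this
  obtain ⟨I, hI, hIu⟩ := exists_index hT P y hy hinj
  have hcard := card_index_le hT P y hy I hI
  have hsum := min_sum_le hT P y I hI
  set φ := I.equivFin
  have hsep : ∀ t ∈ I, ∀ a ∈ pts P y (t.1 + 1) t.2.1, ∀ b ∈ pts P y (t.1 + 1) t.2.2,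
      s * max (Metric.diam (pts P y (t.1 + 1) t.2.1 : Set (EuclideanSpace ℝ (Fin d))))
        (Metric.diam (pts P y (t.1 + 1) t.2.2 : Set (EuclideanSpace ℝ (Fin d)))) ≤ dist a b := by
    intro t ht a ha b hb
    obtain ⟨p, q, hp, hq, hl, h1, h2⟩ := hI t ht
    have hr : (0 : ℝ) < 2 ^ (t.1 + 1) := by positivity
    have hdiam : ∀ c, Metric.diam (pts P y (t.1 + 1) c : Set (EuclideanSpace ℝ (Fin d))) ≤
        d * (2 * M / 2 ^ (t.1 + 1)) := by
      intro c
      apply Metric.diam_le_of_forall_dist_le (by positivity)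
      intro u hu v hv
      apply dist_le_of_coord (by positivity)
      intro k
      have hu' := (mem_pts.mp (Finset.mem_coe.mp hu)).2
      have hv' := (mem_pts.mp (Finset.mem_coe.mp hv)).2
      have h3 := same_real (hu'.trans hv'.symm) k
      rw [hyd, le_div_iff₀ hr, mul_assoc]
      nlinarith
    have hl' := hl.congr ((mem_pts.mp ha).2.trans h1) ((mem_pts.mp hb).2.trans h2)
    obtain ⟨k, hk⟩ := far_real hl'.1
    have hm := max_le (hdiam t.2.1) (hdiam t.2.2)
    calc _ ≤ s * (d * (2 * M / 2 ^ (t.1 + 1))) := mul_le_mul_of_nonneg_left hm (by linarith)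
      _ = s * d * (2 * M / 2 ^ (t.1 + 1)) := by ring
      _ ≤ T * (2 * M / 2 ^ (t.1 + 1)) := mul_le_mul_of_nonneg_right hsd (by positivity)
      _ ≤ (|y a k - y b k| * 2 ^ (t.1 + 1)) * (2 * M / 2 ^ (t.1 + 1)) :=
        mul_le_mul_of_nonneg_right hk.le (by positivity)
      _ = |a k - b k| := by
        rw [hyd]
        field_simp
      _ ≤ dist a b := coord_le_dist a b k
  refine ⟨I.card, fun i => pts P y ((φ.symm i).1.1 + 1) (φ.symm i).1.2.1,
    fun i => pts P y ((φ.symm i).1.1 + 1) (φ.symm i).1.2.2, ?_, ?_, ?_, ?_, ?_⟩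
  · have h1 : (I.card : ℝ) ≤ P.card * (2 * (2 ^ d * (4 * T + 3) ^ d)) := by exact_mod_cast hcard
    refine h1.trans ?_
    calc (P.card : ℝ) * (2 * (2 ^ d * (4 * T + 3) ^ d))
        ≤ P.card * (2 * (2 ^ d * ((4 * d + 7) ^ d * s ^ d))) := by gcongr
      _ = 2 * (2 ^ d * (4 * d + 7) ^ d * s ^ d * P.card) := by ring
      _ ≤ 16 * (2 ^ d * (4 * d + 7) ^ d * s ^ d * P.card) :=
        mul_le_mul_of_nonneg_right (by norm_num) (by positivity)
      _ = _ := by ring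
  · intro i
    obtain ⟨p, q, hp, hq, hl, h1, h2⟩ := hI _ (φ.symm i).2
    exact ⟨⟨p, mem_pts.mpr ⟨hp, h1.symm⟩⟩, ⟨q, mem_pts.mpr ⟨hq, h2.symm⟩⟩,
      fun x hx => (mem_pts.mp hx).1, fun x hx => (mem_pts.mp hx).1⟩
  · intro i
    exact hsep _ (φ.symm i).2
  · intro p hp q hq hne
    obtain ⟨t, ⟨htI, ht⟩, hu⟩ := hIu p hp q hq hne
    refine ⟨φ ⟨t, htI⟩, ?_, ?_⟩
    · simpa using ht
    · intro i hi
      have := hu _ ⟨(φ.symm i).2, hi⟩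
      exact φ.symm_apply_eq.mp (Subtype.ext this)
  · have e : (∑ i, (min (pts P y ((φ.symm i).1.1 + 1) (φ.symm i).1.2.1).card
        (pts P y ((φ.symm i).1.1 + 1) (φ.symm i).1.2.2).card : ℝ)) =
        ∑ t ∈ I, (min (pts P y (t.1 + 1) t.2.1).card (pts P y (t.1 + 1) t.2.2).card : ℝ) := by
      rw [← Finset.sum_coe_sort I]
      exact Equiv.sum_comp φ.symm (fun t : I =>
        (min (pts P y (t.1.1 + 1) t.1.2.1).card (pts P y (t.1.1 + 1) t.1.2.2).card : ℝ))
    rw [e]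
    refine hsum.trans ?_
    have hlogn : 0 ≤ Real.log P.card := Real.log_nonneg (by exact_mod_cast (by omega : 1 ≤ P.card))
    have hl2 : (1 : ℝ) / 2 ≤ Real.log 2 := by linarith [Real.log_two_gt_d9]
    have hdiv : 4 * Real.log P.card / Real.log 2 ≤ 8 * Real.log P.card := by
      rw [div_le_iff₀ (by linarith)]
      nlinarith
    have h2d : (1 : ℝ) ≤ 2 ^ d := one_le_pow₀ (by norm_num)
    calc (P.card : ℝ) * (4 * Real.log P.card / Real.log 2 * (2 * (4 * T + 3) ^ d))
        ≤ P.card * (8 * Real.log P.card * (2 * ((4 * d + 7) ^ d * s ^ d))) := by gcongr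
      _ = 1 * (16 * (4 * d + 7) ^ d * s ^ d * P.card * Real.log P.card) := by ring
      _ ≤ 2 ^ d * (16 * (4 * d + 7) ^ d * s ^ d * P.card * Real.log P.card) :=
        mul_le_mul_of_nonneg_right h2d (by positivity)
      _ = _ := by ring
end

section
/- Let T be a full binary tree and let ε be a real number with 0 < ε ≤ 1/2. For each node u of T define lbl(u) = ⌊log_{1+ε}(|T_u|)⌋, where |T_u| is the number of leaves of the subtree rooted at u, and call a node u special if u is a leaf or if lbl(u) differs from the labels of both children of u. Then for every node w of T, the subtree T_w contains a special node w' (a descendant of w, possibly w itself) with |T_{w'}| ≥ (1 − 2ε)·|T_w|. -/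
/-- A full binary tree: every non-leaf node has exactly two children. -/
inductive FullBinaryTree : Type
  | leaf : FullBinaryTree
  | node : FullBinaryTree → FullBinaryTree → FullBinaryTree

/-- The number of leaves of a full binary tree. -/
def FullBinaryTree.leaves : FullBinaryTree → ℕ
  | .leaf => 1
  | .node l r => l.leaves + r.leaves

/-- `u.IsSubtree t` means `u` is the subtree of `t` rooted at some node of `t`. -/
inductive FullBinaryTree.IsSubtree : FullBinaryTree → FullBinaryTree → Prop
  | refl (t : FullBinaryTree) : IsSubtree t t
  | left {u l r : FullBinaryTree} : IsSubtree u l → IsSubtree u (.node l r)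
  | right {u l r : FullBinaryTree} : IsSubtree u r → IsSubtree u (.node l r)

/-- The label of a node: `⌊log_{1+ε}(number of leaves below it)⌋`. -/
noncomputable def FullBinaryTree.lbl (ε : ℝ) (t : FullBinaryTree) : ℤ :=
  ⌊Real.log t.leaves / Real.log (1 + ε)⌋

/-- A node is special if it is a leaf or its label differs from the labels
of both of its children. -/
def FullBinaryTree.Special (ε : ℝ) : FullBinaryTree → Prop
  | .leaf => True
  | .node l r =>
      FullBinaryTree.lbl ε (.node l r) ≠ FullBinaryTree.lbl ε l ∧
      FullBinaryTree.lbl ε (.node l r) ≠ FullBinaryTree.lbl ε r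

/-- Descending along children with the same label ends at a special node. -/
theorem exists_special_same_lbl (ε : ℝ) (w : FullBinaryTree) :
    ∃ w' : FullBinaryTree, w'.IsSubtree w ∧ w'.Special ε ∧ w'.lbl ε = w.lbl ε := by
  induction w with
  | leaf => exact ⟨.leaf, .refl _, trivial, rfl⟩
  | node l r ihl ihr =>
    by_cases hl : FullBinaryTree.lbl ε (.node l r) = l.lbl ε
    · obtain ⟨w', h1, h2, h3⟩ := ihl
      exact ⟨w', .left h1, h2, h3.trans hl.symm⟩
    · by_cases hr : FullBinaryTree.lbl ε (.node l r) = r.lbl ε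
      · obtain ⟨w', h1, h2, h3⟩ := ihr
        exact ⟨w', .right h1, h2, h3.trans hr.symm⟩
      · exact ⟨.node l r, .refl _, ⟨hl, hr⟩, rfl⟩

theorem leaves_pos (t : FullBinaryTree) : 0 < t.leaves := by
  induction t with
  | leaf => simp [FullBinaryTree.leaves]
  | node l r ihl ihr => simp only [FullBinaryTree.leaves]; omega

/-- Every subtree `T_w` of a full binary tree contains a special node `w'` with
`|T_{w'}| ≥ (1 - 2ε)·|T_w|`. -/
theorem exists_large_special_subtree :
    ∀ ε : ℝ, 0 < ε → ε ≤ 1 / 2 →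
    ∀ T w : FullBinaryTree, w.IsSubtree T →
    ∃ w' : FullBinaryTree, w'.IsSubtree w ∧ w'.Special ε ∧
      (1 - 2 * ε) * w.leaves ≤ (w'.leaves : ℝ) := by
  intro ε h0 h1 T w _
  obtain ⟨w', hs, hsp, hl⟩ := exists_special_same_lbl ε w
  refine ⟨w', hs, hsp, ?_⟩
  have hw : (0 : ℝ) < w.leaves := by exact_mod_cast leaves_pos w
  have hw' : (0 : ℝ) < w'.leaves := by exact_mod_cast leaves_pos w'
  have hL : 0 < Real.log (1 + ε) := Real.log_pos (by linarith)
  unfold FullBinaryTree.lbl at hl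
  have h2 := Int.abs_sub_lt_one_of_floor_eq_floor hl
  have h3 := (abs_lt.mp h2).1
  rw [← sub_div, lt_div_iff₀ hL] at h3
  have h4 : Real.log w.leaves < Real.log ((1 + ε) * w'.leaves) := by
    rw [Real.log_mul (by linarith) hw'.ne']
    linarith
  have h5 := (Real.log_lt_log_iff hw (by positivity)).mp h4
  have h6 : (1 - 2 * ε) * w.leaves ≤ (1 - 2 * ε) * ((1 + ε) * w'.leaves) :=
    mul_le_mul_of_nonneg_left h5.le (by linarith)
  nlinarith [mul_pos h0 hw', mul_pos h0 (mul_pos h0 hw')]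
end

section
/- For every integer d ≥ 1 and every finite point set P ⊂ ℝ^d containing at least two distinct points, there exists a partition of P into two nonempty disjoint sets P_1 and P_2 with P_1 ∪ P_2 = P such that diam'(P_1) ≤ (1 − 1/(2d)) · diam'(P) and diam'(P_2) ≤ (1 − 1/(2d)) · diam'(P). -/
/-- `diam' P`: the sum of the side lengths of the minimum axis-aligned bounding
box of the finite nonempty point set `P ⊆ ℝ^d`. -/
noncomputable def diam' {d : ℕ} (P : Finset (EuclideanSpace ℝ (Fin d)))
    (h : P.Nonempty) : ℝ :=
  ∑ i : Fin d, ((P.sup' h fun p => p i) - (P.inf' h fun p => p i))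

lemma fair_split_aux {d : ℕ} (hd : 1 ≤ d) (P Q : Finset (EuclideanSpace ℝ (Fin d)))
    (h : P.Nonempty) (hQ : Q.Nonempty) (hs : Q ⊆ P) (i : Fin d)
    (hmax : ∀ j, ((P.sup' h fun p => p j) - (P.inf' h fun p => p j)) ≤
      ((P.sup' h fun p => p i) - (P.inf' h fun p => p i)))
    (hi : ((Q.sup' hQ fun p => p i) - (Q.inf' hQ fun p => p i)) ≤
      ((P.sup' h fun p => p i) - (P.inf' h fun p => p i)) / 2) :
    diam' Q hQ ≤ (1 - 1 / (2 * d)) * diam' P h := by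
  have hd0 : (0 : ℝ) < d := by exact_mod_cast hd
  have h1 : diam' P h ≤ d * ((P.sup' h fun p => p i) - (P.inf' h fun p => p i)) := by
    unfold diam'
    calc _ ≤ ∑ j : Fin d, ((P.sup' h fun p => p i) - (P.inf' h fun p => p i)) :=
          Finset.sum_le_sum fun j _ => hmax j
      _ = _ := by simp [mul_sub]
  have h2 : diam' Q hQ ≤
      diam' P h - ((P.sup' h fun p => p i) - (P.inf' h fun p => p i)) / 2 := by
    unfold diam'
    rw [← Finset.add_sum_erase _ _ (Finset.mem_univ i),
      ← Finset.add_sum_erase (a := i) Finset.univ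
        (fun i => (P.sup' h fun p => p i) - (P.inf' h fun p => p i)) (Finset.mem_univ i)]
    have h3 : ∑ j ∈ Finset.univ.erase i, ((Q.sup' hQ fun p => p j) - (Q.inf' hQ fun p => p j))
        ≤ ∑ j ∈ Finset.univ.erase i, ((P.sup' h fun p => p j) - (P.inf' h fun p => p j)) := by
      refine Finset.sum_le_sum fun j _ => ?_
      exact sub_le_sub (Finset.sup'_mono _ hs hQ) (Finset.inf'_mono _ hs hQ)
    linarith
  have h4 : (1 - 1 / (2 * d)) * diam' P h = diam' P h - diam' P h / d / 2 := by
    field_simp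
  have h5 : diam' P h / d ≤ ((P.sup' h fun p => p i) - (P.inf' h fun p => p i)) := by
    rw [div_le_iff₀ hd0]; linarith
  rw [h4]; linarith

/-- Fair split: every finite set `P ⊆ ℝ^d` with at least two points can be partitioned
into nonempty parts `P₁, P₂` with `diam'(Pⱼ) ≤ (1 - 1/(2d))·diam'(P)` for `j = 1, 2`. -/
theorem fair_split_exists :
    ∀ d : ℕ, 1 ≤ d →
    ∀ (P : Finset (EuclideanSpace ℝ (Fin d))) (h : P.Nonempty), 2 ≤ P.card →
    ∃ (P₁ P₂ : Finset (EuclideanSpace ℝ (Fin d)))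
      (h₁ : P₁.Nonempty) (h₂ : P₂.Nonempty),
      Disjoint P₁ P₂ ∧ (↑P₁ ∪ ↑P₂ : Set (EuclideanSpace ℝ (Fin d))) = ↑P ∧
      diam' P₁ h₁ ≤ (1 - 1 / (2 * d)) * diam' P h ∧
      diam' P₂ h₂ ≤ (1 - 1 / (2 * d)) * diam' P h := by
  classical
  intro d hd P h hc
  haveI : Nonempty (Fin d) := ⟨⟨0, hd⟩⟩
  obtain ⟨i, hmax⟩ := Finite.exists_max
    (fun j : Fin d => (P.sup' h fun p => p j) - (P.inf' h fun p => p j))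
  have hpos : 0 < (P.sup' h fun p => p i) - (P.inf' h fun p => p i) := by
    obtain ⟨a, ha, b, hb, hab⟩ := Finset.one_lt_card.mp hc
    obtain ⟨j, hj⟩ : ∃ j, a j ≠ b j := by
      by_contra hcon
      push Not at hcon
      exact hab (by ext j; exact hcon j)
    refine lt_of_lt_of_le ?_ (hmax j)
    have a1 := Finset.le_sup' (fun p : EuclideanSpace ℝ (Fin d) => p j) ha
    have b1 := Finset.le_sup' (fun p : EuclideanSpace ℝ (Fin d) => p j) hb
    have a2 := Finset.inf'_le (fun p : EuclideanSpace ℝ (Fin d) => p j) ha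
    have b2 := Finset.inf'_le (fun p : EuclideanSpace ℝ (Fin d) => p j) hb
    simp only at a1 b1 a2 b2
    rcases lt_or_gt_of_ne hj with hl | hl <;> linarith
  obtain ⟨x, hx, hxe⟩ := Finset.exists_mem_eq_sup' h (fun p : EuclideanSpace ℝ (Fin d) => p i)
  obtain ⟨y, hy, hye⟩ := Finset.exists_mem_eq_inf' h (fun p : EuclideanSpace ℝ (Fin d) => p i)
  set M := P.sup' h fun p => p i with hM
  set m := P.inf' h fun p => p i with hm
  have h₁ : (P.filter fun p => p i ≤ (M + m) / 2).Nonempty :=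
    ⟨y, Finset.mem_filter.mpr ⟨hy, by linarith⟩⟩
  have h₂ : (P.filter fun p => ¬ p i ≤ (M + m) / 2).Nonempty :=
    ⟨x, Finset.mem_filter.mpr ⟨hx, by linarith⟩⟩
  refine ⟨_, _, h₁, h₂, Finset.disjoint_filter_filter_not _ _ _, ?_, ?_, ?_⟩
  · rw [← Finset.coe_union, Finset.filter_union_filter_not_eq]
  · refine fair_split_aux hd P _ h h₁ (Finset.filter_subset _ _) i hmax ?_
    have e1 := Finset.sup'_le h₁ (fun p : EuclideanSpace ℝ (Fin d) => p i)
      (a := (M + m) / 2) (fun p hp => (Finset.mem_filter.mp hp).2)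
    have e2 : m ≤ _ := Finset.inf'_mono (fun p : EuclideanSpace ℝ (Fin d) => p i)
      (Finset.filter_subset _ _) h₁
    rw [← hM, ← hm]
    linarith
  · refine fair_split_aux hd P _ h h₂ (Finset.filter_subset _ _) i hmax ?_
    have e1 := Finset.le_inf' h₂ (fun p : EuclideanSpace ℝ (Fin d) => p i)
      (a := (M + m) / 2) (fun p hp => (not_le.mp (Finset.mem_filter.mp hp).2).le)
    have e2 : _ ≤ M := Finset.sup'_mono (fun p : EuclideanSpace ℝ (Fin d) => p i)
      (Finset.filter_subset _ _) h₂
    rw [← hM, ← hm]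
    linarith
end
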